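/- arXiv:2012.11565 — 2 statements merged into one kernel-verified Lean document; each statement's English description precedes it below -/
import Mathlib

section
/- Let δ > 0, X ≥ H ≥ 2 and 2 ≤ D₀ ≤ X^{1−δ}. For d ∈ ℕ set γ_{d,H} = Σ_{m ≥ 1, gcd(m,d)=1} (d/(πm) · sin(πmH/d))². Let λ : ℕ → ℝ satisfy |λ_d| ≤ 1 for all d and λ_d = 0 for d > D₀, and let g : ℝ → ℝ be smooth and compactly supported in [1/4, 2], with ĝ(0) = ∫ g. Then ∫_ℝ g(y/X)·(Σ_{d,m ≥ 1 : y−H < dm ≤ y} λ_d − H·Σ_{d ≤ D₀} λ_d/d)² dy = S₁ + S₂ + S₃ + O(H³(log X)³), where S₁ = 2ĝ(0)·X·Σ_{d ≤ D₀} γ_{d,H}·(Σ_{m ≤ D₀, d | m} λ_m/m)², S₂ = Σ_{0 < |k| ≤ H} (H − |k|)·Σ_{d₁,d₂ ≤ D₀, gcd(d₁,d₂) | k} λ_{d₁}λ_{d₂}·(Σ_{m₁,m₂ ≥ 1 : d₁m₁ = d₂m₂ + k} g(d₁m₁/X) − ĝ(0)·X/lcm(d₁,d₂)), and S₃ = H·Σ_n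 g(n/X)·(Σ_{d | n} λ_d)² − ĝ(0)·H·X·X^{−10}·Σ_{n ≤ X^{10}} (Σ_{d | n} λ_d)²; the implied constant depends only on g and δ. -/
open Real MeasureTheory
open scoped Classical

lemma fejer_sin (H : ℝ) (r : ℕ) (hr : 1 ≤ r) :
    HasSum (fun j : ℕ => ((r : ℝ) / (π * j) * sin (π * j * H / r)) ^ 2)
      ((r : ℝ) ^ 2 * (Int.fract (H / r) * (1 - Int.fract (H / r))) / 2) := by
  have hr0 : (r : ℝ) ≠ 0 := by positivity
  set x := Int.fract (H / r) with hx
  have h1 := hasSum_one_div_nat_pow_mul_cos (k := 1) one_ne_zero (x := x)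
    ⟨Int.fract_nonneg _, (Int.fract_lt_one _).le⟩
  have h2 := (hasSum_zeta_two.sub h1).mul_left ((r : ℝ) ^ 2 / (2 * π ^ 2))
  have hb : (Polynomial.map (algebraMap ℚ ℝ) (Polynomial.bernoulli 2)).eval x
      = x ^ 2 - x + 6⁻¹ := bernoulliFun_two x
  simp only [mul_one] at h2
  rw [hb] at h2
  have e1 : (fun j : ℕ => ((r : ℝ) / (π * j) * sin (π * j * H / r)) ^ 2) =
      fun i : ℕ => (r : ℝ) ^ 2 / (2 * π ^ 2) *
        (1 / (i : ℝ) ^ 2 - 1 / (i : ℝ) ^ 2 * cos (2 * π * i * x)) := by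
    ext j
    have hc : cos (2 * π * j * x) = 1 - 2 * sin (π * j * H / r) ^ 2 := by
      have e : 2 * π * j * x = 2 * (π * j * H / r) - (((j : ℤ) * ⌊H / r⌋ : ℤ) : ℝ) * (2 * π) := by
        have : H / r = ⌊H / r⌋ + x := by rw [hx]; exact (Int.floor_add_fract _).symm
        push_cast
        have e2 : 2 * (π * j * H / r) = 2 * (π * j * (H / r)) := by ring
        rw [e2, hx, Int.fract]
        ring
      rw [e, cos_sub_int_mul_two_pi, cos_two_mul]
      have := sin_sq_add_cos_sq (π * j * H / r)
      linarith
    rw [hc]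
    rcases Nat.eq_zero_or_pos j with rfl | hj
    · simp
    · have : (j : ℝ) ≠ 0 := by positivity
      field_simp
      ring
  have e2 : (r : ℝ) ^ 2 * (x * (1 - x)) / 2 = (r : ℝ) ^ 2 / (2 * π ^ 2) * (π ^ 2 / 6 -
      (-1) ^ (1 + 1) * (2 * π) ^ 2 / 2 / ((Nat.factorial 2 : ℕ) : ℝ) * (x ^ 2 - x + 6⁻¹)) := by
    simp [Nat.factorial]
    field_simp
    ring
  rw [e1, e2]
  exact h2

noncomputable def gam (H : ℝ) (d : ℕ) : ℝ :=
  ∑' m : ℕ, if 1 ≤ m ∧ Nat.gcd m d = 1 then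
    ((d : ℝ) / (π * m) * sin (π * m * H / d)) ^ 2 else 0

lemma sum_gam (H : ℝ) (r : ℕ) (hr : 1 ≤ r) :
    ∑ d ∈ r.divisors, gam H d
      = (r : ℝ) ^ 2 * (Int.fract (H / r) * (1 - Int.fract (H / r))) / 2 := by
  have hs := fejer_sin H r hr
  rw [← hs.tsum_eq]
  have key : ∀ d ∈ r.divisors, gam H d = ∑' j : ℕ, if Nat.gcd j r = r / d then
      ((r : ℝ) / (π * j) * sin (π * j * H / r)) ^ 2 else 0 := by
    intro d hd
    obtain ⟨e, rfl⟩ := Nat.dvd_of_mem_divisors hd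
    have hd0 : 0 < d := by rcases Nat.eq_zero_or_pos d with h | h; · simp [h] at hr
                           · exact h
    have he0 : 0 < e := by rcases Nat.eq_zero_or_pos e with h | h; · simp [h] at hr
                           · exact h
    rw [Nat.mul_div_cancel_left _ hd0]
    have hinj : Function.Injective (fun m : ℕ => e * m) := fun a b h => by
      exact Nat.eq_of_mul_eq_mul_left he0 h
    rw [← hinj.tsum_eq]
    · unfold gam
      congr 1
      ext m
      have hg : Nat.gcd (e * m) (d * e) = e * Nat.gcd m d := by
        rw [mul_comm d e, Nat.gcd_mul_left]
      rw [hg]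
      have : (e * Nat.gcd m d = e) ↔ Nat.gcd m d = 1 := by
        constructor
        · intro h; exact Nat.eq_of_mul_eq_mul_left he0 (by rw [h, mul_one])
        · intro h; rw [h, mul_one]
      simp only [this]
      have hdR : (d : ℝ) ≠ 0 := by positivity
      have heR : (e : ℝ) ≠ 0 := by positivity
      rcases Nat.eq_zero_or_pos m with rfl | hm
      · simp
      · have hmR : (m : ℝ) ≠ 0 := by positivity
        have hm1 : 1 ≤ m := hm
        simp only [hm1, true_and]
        congr 1
        push_cast
        congr 2
        · field_simp
        · congr 1; field_simp
    · intro j hj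
      simp only [Function.mem_support, ne_eq, ite_eq_right_iff, Classical.not_imp] at hj
      have : e ∣ j := by rw [← hj.1]; exact Nat.gcd_dvd_left _ _
      obtain ⟨m, rfl⟩ := this
      exact ⟨m, rfl⟩
  rw [Finset.sum_congr rfl key, ← Summable.tsum_finsetSum]
  · congr 1
    ext j
    rw [Finset.sum_eq_single (r / Nat.gcd j r)]
    · rw [if_pos]
      rw [Nat.div_div_self (Nat.gcd_dvd_right _ _) (by omega)]
    · intro b hb hne
      rw [if_neg]
      intro h
      apply hne
      rw [h, Nat.div_div_self (Nat.dvd_of_mem_divisors hb) (by omega)]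
    · intro h
      exfalso; apply h
      rw [Nat.mem_divisors]
      exact ⟨Nat.div_dvd_of_dvd (Nat.gcd_dvd_right _ _), by omega⟩
  · intro d hd
    refine Summable.of_nonneg_of_le ?_ ?_ hs.summable
    · intro j; split_ifs <;> positivity
    · intro j; split_ifs
      · exact le_rfl
      · positivity

lemma sum_Icc_symm (N : ℕ) (f : ℤ → ℝ) (hf : ∀ k, f (-k) = f k) :
    ∑ k ∈ Finset.Icc (-(N : ℤ)) N, f k = f 0 + 2 * ∑ l ∈ Finset.Icc 1 N, f (l : ℤ) := by
  induction N with
  | zero => simp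
  | succ n ih =>
    have h1 : Finset.Icc (-((n + 1 : ℕ) : ℤ)) ((n + 1 : ℕ) : ℤ)
        = insert (-((n + 1 : ℕ) : ℤ)) (insert ((n + 1 : ℕ) : ℤ) (Finset.Icc (-(n : ℤ)) n)) := by
      ext k; simp only [Finset.mem_Icc, Finset.mem_insert]; omega
    rw [h1, Finset.sum_insert, Finset.sum_insert, ih, Finset.sum_Icc_succ_top (by omega), hf]
    · ring
    · simp
    · simp only [Finset.mem_Icc, Finset.mem_insert]; omega

lemma sum_multiples (N r : ℕ) (hr : 1 ≤ r) (f : ℕ → ℝ) :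
    ∑ l ∈ Finset.Icc 1 N, (if r ∣ l then f l else 0) = ∑ i ∈ Finset.Icc 1 (N / r), f (r * i) := by
  rw [← Finset.sum_filter]
  symm
  apply Finset.sum_bij (fun i _ => r * i)
  · intro i hi
    simp only [Finset.mem_Icc, Finset.mem_filter] at hi ⊢
    refine ⟨⟨?_, ?_⟩, dvd_mul_right _ _⟩
    · exact Nat.mul_pos hr hi.1
    · calc r * i ≤ r * (N / r) := Nat.mul_le_mul_left _ hi.2
        _ ≤ N := Nat.mul_div_le _ _
  · intro a _ b _ h
    exact Nat.eq_of_mul_eq_mul_left hr h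
  · intro l hl
    simp only [Finset.mem_Icc, Finset.mem_filter] at hl
    obtain ⟨i, rfl⟩ := hl.2
    refine ⟨i, ?_, rfl⟩
    simp only [Finset.mem_Icc]
    constructor
    · rcases Nat.eq_zero_or_pos i with h | h
      · simp [h] at hl
      · exact h
    · rw [Nat.le_div_iff_mul_le hr, mul_comm]; exact hl.1.2
  · intros; rfl

lemma fejer_int (H : ℝ) (hH : 0 ≤ H) (r : ℕ) (hr : 1 ≤ r) :
    ∑ k ∈ Finset.Icc (-(⌊H⌋₊ : ℤ)) ⌊H⌋₊, (if (r : ℤ) ∣ k then H - |(k : ℝ)| else 0)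
      = H ^ 2 / r + 2 / r * ∑ d ∈ r.divisors, gam H d := by
  have hr0 : (r : ℝ) ≠ 0 := by positivity
  rw [sum_gam H r hr, sum_Icc_symm _ _ (by intro k; simp)]
  have h2 : ∀ l ∈ Finset.Icc 1 ⌊H⌋₊, (if (r : ℤ) ∣ (l : ℤ) then H - |((l : ℤ) : ℝ)| else 0)
      = if r ∣ l then (fun l : ℕ => H - (l : ℝ)) l else 0 := by
    intro l _
    simp [Int.natCast_dvd_natCast]
  rw [Finset.sum_congr rfl h2, sum_multiples _ _ hr]
  have hfl : ⌊H⌋₊ / r = ⌊H / r⌋₊ := (Nat.floor_div_natCast H r).symm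
  rw [hfl]
  have h3 : ∀ N : ℕ, ∑ i ∈ Finset.Icc 1 N, (H - ((r * i : ℕ) : ℝ)) = N * H - r * (N * (N + 1) / 2) := by
    intro N
    induction N with
    | zero => simp
    | succ n ih => rw [Finset.sum_Icc_succ_top (by omega), ih]; push_cast; ring
  rw [h3]
  have hx : H = r * (⌊H / r⌋₊ + Int.fract (H / r)) := by
    have : (⌊H / r⌋₊ : ℝ) = ⌊H / r⌋ := by
      rw [natCast_floor_eq_intCast_floor (by positivity)]
    rw [this, Int.floor_add_fract]; field_simp
  generalize Int.fract (H / r) = x at *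
  generalize (⌊H / r⌋₊ : ℝ) = N at *
  simp
  rw [hx]
  field_simp
  ring

lemma gcd_lcm_real (a b : ℕ) (ha : 1 ≤ a) (hb : 1 ≤ b) :
    (1 : ℝ) / (Nat.lcm a b : ℝ) = (Nat.gcd a b : ℝ) / ((a : ℝ) * b) := by
  have h := Nat.gcd_mul_lcm a b
  have h' : (Nat.gcd a b : ℝ) * (Nat.lcm a b : ℝ) = (a : ℝ) * b := by exact_mod_cast h
  have hl : (Nat.lcm a b : ℝ) ≠ 0 := by
    have := Nat.lcm_pos ha hb
    positivity
  have ha' : (a : ℝ) ≠ 0 := by positivity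
  have hb' : (b : ℝ) ≠ 0 := by positivity
  rw [div_eq_div_iff hl (mul_ne_zero ha' hb')]
  linarith

lemma divisors_gcd_sum (D d1 d2 : ℕ) (h1 : d1 ∈ Finset.Icc 1 D) (f : ℕ → ℝ) :
    ∑ d ∈ (Nat.gcd d1 d2).divisors, f d
      = ∑ d ∈ Finset.Icc 1 D, (if d ∣ d1 then (1 : ℝ) else 0) * (if d ∣ d2 then (1 : ℝ) else 0) * f d := by
  simp only [Finset.mem_Icc] at h1
  have : (Nat.gcd d1 d2).divisors = (Finset.Icc 1 D).filter (fun d => d ∣ d1 ∧ d ∣ d2) := by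
    ext d
    simp only [Nat.mem_divisors, Finset.mem_filter, Finset.mem_Icc, Nat.dvd_gcd_iff]
    constructor
    · rintro ⟨h, _⟩
      refine ⟨⟨Nat.pos_of_dvd_of_pos h.1 (by omega), ?_⟩, h⟩
      exact (Nat.le_of_dvd (by omega) h.1).trans h1.2
    · rintro ⟨_, h⟩
      refine ⟨h, ?_⟩
      have := Nat.gcd_pos_of_pos_left d2 (show 0 < d1 by omega)
      omega
  rw [this, Finset.sum_filter]
  apply Finset.sum_congr rfl
  intro d _
  by_cases a : d ∣ d1 <;> by_cases b : d ∣ d2 <;> simp [a, b]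

lemma main_identity (H : ℝ) (hH : 0 ≤ H) (D : ℕ) (lam : ℕ → ℝ) :
    ∑ k ∈ Finset.Icc (-(⌊H⌋₊ : ℤ)) ⌊H⌋₊, (H - |(k : ℝ)|) *
        ∑ d₁ ∈ Finset.Icc 1 D, ∑ d₂ ∈ Finset.Icc 1 D,
          (if (Nat.gcd d₁ d₂ : ℤ) ∣ k then lam d₁ * lam d₂ / (Nat.lcm d₁ d₂ : ℝ) else 0)
      = H ^ 2 * (∑ d ∈ Finset.Icc 1 D, lam d / d) ^ 2
        + 2 * ∑ d ∈ Finset.Icc 1 D, gam H d *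
            (∑ m ∈ Finset.Icc 1 D, if d ∣ m then lam m / m else 0) ^ 2 := by
  have e1 : ∑ k ∈ Finset.Icc (-(⌊H⌋₊ : ℤ)) ⌊H⌋₊, (H - |(k : ℝ)|) *
        ∑ d₁ ∈ Finset.Icc 1 D, ∑ d₂ ∈ Finset.Icc 1 D,
          (if (Nat.gcd d₁ d₂ : ℤ) ∣ k then lam d₁ * lam d₂ / (Nat.lcm d₁ d₂ : ℝ) else 0)
      = ∑ d₁ ∈ Finset.Icc 1 D, ∑ d₂ ∈ Finset.Icc 1 D, lam d₁ * lam d₂ / (Nat.lcm d₁ d₂ : ℝ) *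
          ∑ k ∈ Finset.Icc (-(⌊H⌋₊ : ℤ)) ⌊H⌋₊,
            (if ((Nat.gcd d₁ d₂ : ℕ) : ℤ) ∣ k then H - |(k : ℝ)| else 0) := by
    simp only [Finset.mul_sum]
    rw [Finset.sum_comm]
    apply Finset.sum_congr rfl; intro d1 _
    rw [Finset.sum_comm]
    apply Finset.sum_congr rfl; intro d2 _
    apply Finset.sum_congr rfl; intro k _
    split_ifs <;> ring
  rw [e1]
  have e2 : ∀ d₁ ∈ Finset.Icc 1 D, ∀ d₂ ∈ Finset.Icc 1 D,
      lam d₁ * lam d₂ / (Nat.lcm d₁ d₂ : ℝ) *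
          ∑ k ∈ Finset.Icc (-(⌊H⌋₊ : ℤ)) ⌊H⌋₊,
            (if ((Nat.gcd d₁ d₂ : ℕ) : ℤ) ∣ k then H - |(k : ℝ)| else 0)
      = H ^ 2 * (lam d₁ / d₁ * (lam d₂ / d₂)) + 2 * ∑ d ∈ Finset.Icc 1 D,
          gam H d * ((if d ∣ d₁ then lam d₁ / d₁ else 0) * (if d ∣ d₂ then lam d₂ / d₂ else 0)) := by
    intro d1 h1 d2 h2
    have h1' := (Finset.mem_Icc.mp h1).1
    have h2' := (Finset.mem_Icc.mp h2).1
    have hg : 1 ≤ Nat.gcd d1 d2 := Nat.gcd_pos_of_pos_left d2 h1'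
    rw [fejer_int H hH _ hg, divisors_gcd_sum D d1 d2 h1]
    have hl := gcd_lcm_real d1 d2 h1' h2'
    have : lam d1 * lam d2 / (Nat.lcm d1 d2 : ℝ)
        = lam d1 * lam d2 * ((Nat.gcd d1 d2 : ℝ) / ((d1 : ℝ) * d2)) := by rw [← hl]; ring
    rw [this]
    have hg0 : (Nat.gcd d1 d2 : ℝ) ≠ 0 := by positivity
    have hd1 : (d1 : ℝ) ≠ 0 := by positivity
    have hd2 : (d2 : ℝ) ≠ 0 := by positivity
    have : ∑ d ∈ Finset.Icc 1 D, gam H d * ((if d ∣ d1 then lam d1 / d1 else 0) *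
        (if d ∣ d2 then lam d2 / d2 else 0)) = lam d1 / d1 * (lam d2 / d2) *
        ∑ d ∈ Finset.Icc 1 D, (if d ∣ d1 then (1 : ℝ) else 0) * (if d ∣ d2 then (1 : ℝ) else 0) *
          gam H d := by
      rw [Finset.mul_sum]
      apply Finset.sum_congr rfl; intro d _
      split_ifs <;> ring
    rw [this]
    field_simp
  rw [Finset.sum_congr rfl (fun d1 h1 => Finset.sum_congr rfl (e2 d1 h1))]
  simp only [Finset.sum_add_distrib]
  congr 1
  · rw [sq (∑ d ∈ Finset.Icc 1 D, lam d / d), Finset.sum_mul_sum, Finset.mul_sum]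
    simp only [Finset.mul_sum]
  · simp only [← Finset.mul_sum]
    congr 1
    have : ∀ d ∈ Finset.Icc 1 D, gam H d * (∑ m ∈ Finset.Icc 1 D, if d ∣ m then lam m / m else 0) ^ 2
        = ∑ d1 ∈ Finset.Icc 1 D, ∑ d2 ∈ Finset.Icc 1 D, gam H d *
          ((if d ∣ d1 then lam d1 / d1 else 0) * (if d ∣ d2 then lam d2 / d2 else 0)) := by
      intro d _
      rw [sq, Finset.sum_mul_sum, Finset.mul_sum]
      simp only [Finset.mul_sum]
    rw [Finset.sum_congr rfl this]
    symm
    rw [Finset.sum_comm]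
    apply Finset.sum_congr rfl; intro d1 _
    rw [Finset.sum_comm]

noncomputable def aa (lam : ℕ → ℝ) (D n : ℕ) : ℝ :=
  ∑ d ∈ Finset.Icc 1 D, if d ∣ n then lam d else 0

lemma card_mult (N l : ℕ) (hl : 1 ≤ l) :
    ∑ n ∈ Finset.Icc 1 N, (if l ∣ n then (1 : ℝ) else 0) = ((N / l : ℕ) : ℝ) := by
  rw [sum_multiples N l hl (fun _ => 1)]
  simp

lemma sum_sq_aa (lam : ℕ → ℝ) (D N : ℕ) :
    ∑ n ∈ Finset.Icc 1 N, aa lam D n ^ 2 = ∑ d₁ ∈ Finset.Icc 1 D, ∑ d₂ ∈ Finset.Icc 1 D,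
      lam d₁ * lam d₂ * ((N / Nat.lcm d₁ d₂ : ℕ) : ℝ) := by
  have : ∀ n ∈ Finset.Icc 1 N, aa lam D n ^ 2 = ∑ d₁ ∈ Finset.Icc 1 D, ∑ d₂ ∈ Finset.Icc 1 D,
      lam d₁ * lam d₂ * (if Nat.lcm d₁ d₂ ∣ n then 1 else 0) := by
    intro n _
    rw [aa, sq, Finset.sum_mul_sum]
    apply Finset.sum_congr rfl; intro d1 _
    apply Finset.sum_congr rfl; intro d2 _
    simp only [Nat.lcm_dvd_iff]
    by_cases a : d1 ∣ n <;> by_cases b : d2 ∣ n <;> simp [a, b]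
  rw [Finset.sum_congr rfl this, Finset.sum_comm]
  apply Finset.sum_congr rfl; intro d1 h1
  rw [Finset.sum_comm]
  apply Finset.sum_congr rfl; intro d2 h2
  rw [← Finset.mul_sum, card_mult]
  exact Nat.lcm_pos (Finset.mem_Icc.mp h1).1 (Finset.mem_Icc.mp h2).1

lemma abs_prod_le (lam : ℕ → ℝ) (hl : ∀ d, |lam d| ≤ 1) (a b : ℕ) : |lam a * lam b| ≤ 1 := by
  rw [abs_mul]
  exact mul_le_one₀ (hl a) (abs_nonneg _) (hl b)

lemma long_average (lam : ℕ → ℝ) (hl : ∀ d, |lam d| ≤ 1) (D : ℕ) (Y : ℝ) (hY : 0 ≤ Y) :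
    |∑ n ∈ Finset.Icc 1 ⌊Y⌋₊, aa lam D n ^ 2 - Y * ∑ d₁ ∈ Finset.Icc 1 D, ∑ d₂ ∈ Finset.Icc 1 D,
      lam d₁ * lam d₂ / (Nat.lcm d₁ d₂ : ℝ)| ≤ (D : ℝ) ^ 2 := by
  rw [sum_sq_aa]
  simp only [Finset.mul_sum]
  rw [← Finset.sum_sub_distrib]
  simp only [← Finset.sum_sub_distrib]
  have key : ∀ d1 ∈ Finset.Icc 1 D, ∀ d2 ∈ Finset.Icc 1 D,
      |lam d1 * lam d2 * ((⌊Y⌋₊ / Nat.lcm d1 d2 : ℕ) : ℝ) - Y * (lam d1 * lam d2 / (Nat.lcm d1 d2 : ℝ))| ≤ 1 := by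
    intro d1 h1 d2 h2
    have e : lam d1 * lam d2 * ((⌊Y⌋₊ / Nat.lcm d1 d2 : ℕ) : ℝ) - Y * (lam d1 * lam d2 / (Nat.lcm d1 d2 : ℝ))
      = (lam d1 * lam d2) * (((⌊Y⌋₊ / Nat.lcm d1 d2 : ℕ) : ℝ) - Y / (Nat.lcm d1 d2 : ℝ)) := by ring
    rw [e, abs_mul]
    refine mul_le_one₀ (abs_prod_le lam hl d1 d2) (abs_nonneg _) ?_
    rw [← Nat.floor_div_natCast, abs_sub_le_iff]
    have h0 : 0 ≤ Y / (Nat.lcm d1 d2 : ℝ) := by positivity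
    constructor
    · linarith [Nat.floor_le h0]
    · linarith [Nat.lt_floor_add_one (Y / (Nat.lcm d1 d2 : ℝ))]
  calc _ ≤ ∑ d1 ∈ Finset.Icc 1 D, ∑ d2 ∈ Finset.Icc 1 D, (1 : ℝ) := by
        refine (Finset.abs_sum_le_sum_abs _ _).trans (Finset.sum_le_sum fun d1 h1 => ?_)
        exact (Finset.abs_sum_le_sum_abs _ _).trans (Finset.sum_le_sum fun d2 h2 => key d1 h1 d2 h2)
    _ = (D : ℝ) ^ 2 := by simp; ring

noncomputable def har (D : ℕ) : ℝ := ∑ d ∈ Finset.Icc 1 D, (1 : ℝ) / d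

lemma har_nonneg (D : ℕ) : 0 ≤ har D := Finset.sum_nonneg fun _ _ => by positivity

lemma har_le (D : ℕ) : har D ≤ 1 + Real.log D := by
  have h := harmonic_le_one_add_log D
  rw [harmonic_eq_sum_Icc] at h
  unfold har
  push_cast at h
  simpa using h

lemma sum_gcd_le (D : ℕ) :
    ∑ d₁ ∈ Finset.Icc 1 D, ∑ d₂ ∈ Finset.Icc 1 D, (Nat.gcd d₁ d₂ : ℝ) / ((d₁ : ℝ) * d₂)
      ≤ har D ^ 3 := by
  have e1 : ∀ e ∈ Finset.Icc 1 D, ∑ d ∈ Finset.Icc 1 D, (if e ∣ d then (1 : ℝ) / d else 0) ≤ har D / e := by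
    intro e he
    have he' := Finset.mem_Icc.mp he
    rw [sum_multiples D e he'.1 (fun d => 1 / (d : ℝ))]
    have : ∑ i ∈ Finset.Icc 1 (D / e), 1 / (((e * i : ℕ)) : ℝ) = har (D / e) / e := by
      unfold har
      rw [Finset.sum_div]
      apply Finset.sum_congr rfl; intro i _
      push_cast
      rw [div_div, mul_comm]
    rw [this]
    gcongr
    unfold har
    apply Finset.sum_le_sum_of_subset_of_nonneg
    · apply Finset.Icc_subset_Icc le_rfl (Nat.div_le_self _ _)
    · intros; positivity
  calc _ ≤ ∑ d₁ ∈ Finset.Icc 1 D, ∑ d₂ ∈ Finset.Icc 1 D, ∑ e ∈ Finset.Icc 1 D,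
        (e : ℝ) * ((if e ∣ d₁ then (1 : ℝ) / d₁ else 0) * (if e ∣ d₂ then (1 : ℝ) / d₂ else 0)) := by
        refine Finset.sum_le_sum fun d1 h1 => Finset.sum_le_sum fun d2 h2 => ?_
        have h1' := Finset.mem_Icc.mp h1
        have hm : Nat.gcd d1 d2 ∈ Finset.Icc 1 D := by
          rw [Finset.mem_Icc]
          exact ⟨Nat.gcd_pos_of_pos_left _ h1'.1, (Nat.gcd_le_left _ h1'.1).trans h1'.2⟩
        refine le_trans (le_of_eq ?_) (Finset.single_le_sum (f := fun e : ℕ => (e : ℝ) *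
          ((if e ∣ d1 then (1 : ℝ) / d1 else 0) * (if e ∣ d2 then (1 : ℝ) / d2 else 0)))
          (fun e _ => ?_) hm)
        · simp only [Nat.gcd_dvd_left, Nat.gcd_dvd_right, if_true]
          ring
        · apply mul_nonneg (by positivity)
          apply mul_nonneg <;> split_ifs <;> positivity
    _ = ∑ e ∈ Finset.Icc 1 D, (e : ℝ) * (∑ d ∈ Finset.Icc 1 D, (if e ∣ d then (1 : ℝ) / d else 0)) ^ 2 := by
        have : ∀ e ∈ Finset.Icc 1 D, (e : ℝ) * (∑ d ∈ Finset.Icc 1 D, (if e ∣ d then (1 : ℝ) / d else 0)) ^ 2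
          = ∑ d1 ∈ Finset.Icc 1 D, ∑ d2 ∈ Finset.Icc 1 D, (e : ℝ) *
          ((if e ∣ d1 then (1 : ℝ) / d1 else 0) * (if e ∣ d2 then (1 : ℝ) / d2 else 0)) := by
          intro e _
          rw [sq, Finset.sum_mul_sum, Finset.mul_sum]
          simp only [Finset.mul_sum]
        rw [Finset.sum_congr rfl this]
        symm
        rw [Finset.sum_comm]
        apply Finset.sum_congr rfl; intro d1 _
        rw [Finset.sum_comm]
    _ ≤ ∑ e ∈ Finset.Icc 1 D, (e : ℝ) * (har D / e) ^ 2 := by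
        refine Finset.sum_le_sum fun e he => ?_
        gcongr
        exact e1 e he
    _ = har D ^ 3 := by
        have : ∀ e ∈ Finset.Icc 1 D, (e : ℝ) * (har D / e) ^ 2 = har D ^ 2 * (1 / e) := by
          intro e he
          have : (e : ℝ) ≠ 0 := by have := (Finset.mem_Icc.mp he).1; positivity
          field_simp
        rw [Finset.sum_congr rfl this, ← Finset.mul_sum]
        change har D ^ 2 * har D = _
        ring

lemma sum_sq_aa_le (lam : ℕ → ℝ) (hl : ∀ d, |lam d| ≤ 1) (D N : ℕ) :
    ∑ n ∈ Finset.Icc 1 N, aa lam D n ^ 2 ≤ N * har D ^ 3 := by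
  rw [sum_sq_aa]
  calc _ ≤ ∑ d₁ ∈ Finset.Icc 1 D, ∑ d₂ ∈ Finset.Icc 1 D, (N : ℝ) * ((Nat.gcd d₁ d₂ : ℝ) / ((d₁ : ℝ) * d₂)) := by
        refine Finset.sum_le_sum fun d1 h1 => Finset.sum_le_sum fun d2 h2 => ?_
        rw [← gcd_lcm_real d1 d2 (Finset.mem_Icc.mp h1).1 (Finset.mem_Icc.mp h2).1]
        calc lam d1 * lam d2 * ((N / Nat.lcm d1 d2 : ℕ) : ℝ) ≤ 1 * ((N / Nat.lcm d1 d2 : ℕ) : ℝ) := by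
              gcongr
              exact (le_abs_self _).trans (abs_prod_le lam hl d1 d2)
          _ ≤ (N : ℝ) / (Nat.lcm d1 d2 : ℝ) := by rw [one_mul]; exact Nat.cast_div_le
          _ = _ := by ring
    _ ≤ _ := by
        simp only [← Finset.mul_sum]
        gcongr
        exact sum_gcd_le D

open scoped FourierTransform SchwartzMap in
lemma quad (g : ℝ → ℝ) (hg : ContDiff ℝ (⊤ : ℕ∞) g) (hgc : HasCompactSupport g) (K : ℕ) :
    ∃ C : ℝ, 0 ≤ C ∧ ∀ c : ℝ, 0 < c → ∀ s : ℝ,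
      |∑' m : ℤ, g (s + c * m) - 1 / c * ∫ t, g t| ≤ C * c ^ (K + 1) := by
  set G : ℝ → ℂ := fun t => (g t : ℂ) with hG
  have hGs : ContDiff ℝ (⊤ : ℕ∞) G := Complex.ofRealCLM.contDiff.comp hg
  have hGc : HasCompactSupport G := hgc.comp_left (g := fun x : ℝ => (x : ℂ)) (by simp)
  set S : 𝓢(ℝ, ℂ) := hGc.toSchwartzMap hGs with hS
  have hSG : (S : ℝ → ℂ) = G := by ext; simp [hS]
  obtain ⟨C, hC0, hC⟩ := (𝓕 S).decay (K + 2) 0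
  have hdec : ∀ ξ : ℝ, |ξ| ^ (K + 2) * ‖𝓕 G ξ‖ ≤ C := by
    intro ξ
    have := hC ξ
    rw [norm_iteratedFDeriv_zero, SchwartzMap.fourier_coe, hSG] at this
    simpa using this
  have hb : Summable (fun n : ℤ => 1 / (n : ℝ) ^ 2) := Real.summable_one_div_int_pow.mpr (by norm_num)
  refine ⟨C * ∑' n : ℤ, 1 / (n : ℝ) ^ 2, by
    apply mul_nonneg hC0.le; exact tsum_nonneg fun n => by positivity, ?_⟩
  intro c hc s
  set f : ℝ → ℂ := fun u => G (c * u) with hf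
  have hfs : ContDiff ℝ (⊤ : ℕ∞) f := hGs.comp (contDiff_const.mul contDiff_id)
  have hfc : HasCompactSupport f := by
    have := hGc.comp_homeomorph (Homeomorph.mulLeft₀ c hc.ne')
    exact this
  have hFf : ∀ ξ : ℝ, 𝓕 f ξ = (1 / c : ℝ) * 𝓕 G (ξ / c) := by
    intro ξ
    rw [Real.fourier_real_eq_integral_exp_smul, Real.fourier_real_eq_integral_exp_smul]
    have := Measure.integral_comp_mul_left
      (fun v : ℝ => Complex.exp (↑(-2 * π * v * (ξ / c)) * Complex.I) • G v) c
    rw [abs_of_pos (inv_pos.mpr hc)] at this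
    rw [one_div, ← Complex.real_smul, ← this]
    congr 1
    ext v
    simp only [hf]
    congr 4
    field_simp
  have hP := SchwartzMap.tsum_eq_tsum_fourier (hfc.toSchwartzMap hfs) (s / c)
  have hco : ((hfc.toSchwartzMap hfs : 𝓢(ℝ, ℂ)) : ℝ → ℂ) = f := by ext; simp
  simp only [SchwartzMap.fourier_coe, hco] at hP
  have hbd : ∀ n : ℤ, n ≠ 0 → ‖𝓕 f n * fourier n ((s / c : ℝ) : UnitAddCircle)‖
      ≤ C * c ^ (K + 1) * (1 / (n : ℝ) ^ 2) := by
    intro n hn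
    have hn1 : (1 : ℝ) ≤ |(n : ℝ)| := by
      have := Int.one_le_abs hn
      exact_mod_cast this
    have hn0 : 0 < |(n : ℝ)| := by linarith
    rw [norm_mul, fourier_apply, Circle.norm_coe, mul_one, hFf, norm_mul, Complex.norm_real,
      Real.norm_of_nonneg (by positivity)]
    have h1 := hdec (n / c)
    rw [abs_div, abs_of_pos hc, div_pow] at h1
    have h2 : ‖𝓕 G (n / c)‖ ≤ C * c ^ (K + 2) / |(n : ℝ)| ^ (K + 2) := by
      rw [le_div_iff₀ (by positivity)]
      rw [div_mul_eq_mul_div, div_le_iff₀ (by positivity)] at h1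
      linarith
    calc 1 / c * ‖𝓕 G (n / c)‖ ≤ 1 / c * (C * c ^ (K + 2) / |(n : ℝ)| ^ (K + 2)) := by gcongr
      _ = C * c ^ (K + 1) * (1 / |(n : ℝ)| ^ (K + 2)) := by field_simp; ring
      _ ≤ C * c ^ (K + 1) * (1 / |(n : ℝ)| ^ 2) := by
          gcongr
          omega
      _ = _ := by rw [sq_abs]
  have hsum : Summable (fun n : ℤ => 𝓕 f n * fourier n ((s / c : ℝ) : UnitAddCircle)) := by
    refine Summable.of_norm_bounded (g := fun n : ℤ => C * c ^ (K + 1) * (1 / (n : ℝ) ^ 2) +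
      if n = 0 then ‖𝓕 f 0 * fourier 0 ((s / c : ℝ) : UnitAddCircle)‖ else 0)
      ((hb.mul_left _).add (hasSum_ite_eq 0 _).summable) ?_
    intro n
    by_cases hn : n = 0
    · subst hn; simp
    · simpa [hn] using hbd n hn
  rw [hsum.tsum_eq_add_tsum_ite 0] at hP
  have hz : 𝓕 f ((0 : ℤ) : ℝ) * fourier (0 : ℤ) ((s / c : ℝ) : UnitAddCircle)
      = ((1 / c * ∫ t, g t : ℝ) : ℂ) := by
    rw [hFf, Real.fourier_real_eq_integral_exp_smul]
    simp [hG, integral_complex_ofReal]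
  rw [hz] at hP
  have hL : ∑' n : ℤ, f (s / c + n) = ((∑' m : ℤ, g (s + c * m) : ℝ) : ℂ) := by
    rw [Complex.ofReal_tsum]
    congr 1
    ext n
    simp only [hf, hG]
    congr 2
    field_simp
  rw [hL] at hP
  have hfin : ((∑' m : ℤ, g (s + c * m) - 1 / c * ∫ t, g t : ℝ) : ℂ) = 
    ∑' n : ℤ, ite (n = 0) 0 (𝓕 f n * fourier n ((s / c : ℝ) : UnitAddCircle)) := by
    rw [Complex.ofReal_sub, hP]; ring
  rw [← Real.norm_eq_abs, ← Complex.norm_real, hfin]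
  have hbs := (hb.mul_left (C * c ^ (K + 1)))
  refine (tsum_of_norm_bounded hbs.hasSum ?_).trans (le_of_eq ?_)
  · intro n
    by_cases hn : n = 0
    · subst hn; simp
    · simpa [hn] using hbd n hn
  · rw [tsum_mul_left]; ring

lemma tsum_int_split (g : ℝ → ℝ) (hgsupp : Function.support g ⊆ Set.Icc (1 / 4 : ℝ) 2)
    (B : ℝ) (hB : ∀ t, |g t| ≤ B) (X H s : ℝ) (hX : 0 < X) (hs0 : 0 ≤ s) (hsH : s ≤ H)
    (d M : ℕ) (hd : 1 ≤ d) (hM : 2 * X ≤ M) :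
    |∑ n ∈ Finset.Icc 1 M, (if d ∣ n then g ((n + s) / X) else 0)
      - ∑' m : ℤ, g (s / X + d / X * m)| ≤ B * ((H / d + 1) * (4 * H / X)) := by
  have hdR : (0 : ℝ) < d := by positivity
  have hB0 : 0 ≤ B := (abs_nonneg _).trans (hB 0)
  have hH0 : 0 ≤ H := hs0.trans hsH
  have hsup : ∀ t, g t ≠ 0 → 1 / 4 ≤ t ∧ t ≤ 2 := fun t ht => hgsupp ht
  set L := ⌊H / d⌋₊ with hL
  have hdisj : Disjoint (Finset.Icc (-(L : ℤ)) 0) ((Finset.Icc 1 (M / d)).map Nat.castEmbedding) := by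
    rw [Finset.disjoint_left]
    intro m hm hm2
    simp only [Finset.mem_map, Finset.mem_Icc, Nat.castEmbedding_apply] at hm hm2
    obtain ⟨i, hi, rfl⟩ := hm2
    omega
  have htri : ∀ m : ℤ, s / X + d / X * m = (s + d * m) / X := by intro m; field_simp
  have h1 : ∑' m : ℤ, g (s / X + d / X * m) = ∑ m ∈ Finset.Icc (-(L : ℤ)) 0, g (s / X + d / X * m)
      + ∑ n ∈ Finset.Icc 1 M, (if d ∣ n then g ((n + s) / X) else 0) := by
    rw [tsum_eq_sum (s := (Finset.Icc (-(L : ℤ)) 0) ∪ ((Finset.Icc 1 (M / d)).map Nat.castEmbedding)),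
      Finset.sum_union hdisj]
    · congr 1
      rw [Finset.sum_map, sum_multiples M d hd (fun n : ℕ => g ((n + s) / X))]
      apply Finset.sum_congr rfl
      intro i _
      rw [htri]
      congr 2
      simp
      ring
    · intro m hm
      by_contra hne
      apply hm
      have h := hsup _ hne
      rw [htri, le_div_iff₀ hX, div_le_iff₀ hX] at h
      simp only [Finset.mem_union, Finset.mem_Icc, Finset.mem_map, Nat.castEmbedding_apply]
      by_cases hm0 : m ≤ 0
      · left
        refine ⟨?_, hm0⟩
        obtain ⟨i, hi⟩ := Int.eq_ofNat_of_zero_le (show 0 ≤ -m by omega)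
        have hmi : m = -(i : ℤ) := by omega
        have : i ≤ L := by
          rw [hL]
          apply Nat.le_floor
          rw [le_div_iff₀ hdR]
          rw [hmi] at h
          push_cast at h
          nlinarith
        omega
      · right
        obtain ⟨i, hi⟩ := Int.eq_ofNat_of_zero_le (show 0 ≤ m by omega)
        refine ⟨i, ⟨by omega, ?_⟩, hi.symm⟩
        rw [Nat.le_div_iff_mul_le hd]
        rw [hi] at h
        push_cast at h
        have h3 : ((i * d : ℕ) : ℝ) ≤ (M : ℝ) := by push_cast; nlinarith
        exact_mod_cast h3
  rw [h1]
  rw [show ∀ a b : ℝ, b - (a + b) = -a by intros; ring, abs_neg]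
  by_cases hHX : H < X / 4
  · have : ∑ m ∈ Finset.Icc (-(L : ℤ)) 0, g (s / X + d / X * m) = 0 := by
      apply Finset.sum_eq_zero
      intro m hm
      by_contra hne
      have h := hsup _ hne
      rw [htri, le_div_iff₀ hX, div_le_iff₀ hX] at h
      have hm0 : (m : ℝ) ≤ 0 := by exact_mod_cast (Finset.mem_Icc.mp hm).2
      nlinarith
    rw [this, abs_zero]
    positivity
  · push Not at hHX
    calc _ ≤ ∑ m ∈ Finset.Icc (-(L : ℤ)) 0, B :=
          (Finset.abs_sum_le_sum_abs _ _).trans (Finset.sum_le_sum fun m _ => hB _)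
      _ = B * ((L : ℝ) + 1) := by
          rw [Finset.sum_const, Int.card_Icc, nsmul_eq_mul, mul_comm]
          congr 1
          rw [show (0 + 1 - -(L : ℤ)).toNat = L + 1 by omega]
          push_cast; rfl
      _ ≤ B * ((H / d + 1) * (4 * H / X)) := by
          have hL2 : (L : ℝ) ≤ H / d := Nat.floor_le (by positivity)
          have h4 : 1 ≤ 4 * H / X := by rw [le_div_iff₀ hX]; linarith
          have : (L : ℝ) + 1 ≤ (H / d + 1) * (4 * H / X) := by
            have : 0 ≤ H / d := by positivity
            nlinarith
          gcongr

lemma Pd_est (g : ℝ → ℝ) (hgcont : Continuous g)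
    (hgsupp : Function.support g ⊆ Set.Icc (1 / 4 : ℝ) 2)
    (B : ℝ) (hB : ∀ t, |g t| ≤ B) (C : ℝ) (K : ℕ)
    (hC : ∀ c : ℝ, 0 < c → ∀ s : ℝ,
      |∑' m : ℤ, g (s + c * m) - 1 / c * ∫ t, g t| ≤ C * c ^ (K + 1))
    (X H : ℝ) (hX : 0 < X) (hH : 0 ≤ H) (d M : ℕ) (hd : 1 ≤ d) (hM : 2 * X ≤ M) :
    |∑ n ∈ Finset.Icc 1 M, (if d ∣ n then ∫ y in (n : ℝ)..(n + H), g (y / X) else 0)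
      - H * X * (∫ t, g t) / d| ≤
      H * (C * (d / X) ^ (K + 1) + B * ((H / d + 1) * (4 * H / X))) := by
  have hdR : (0 : ℝ) < d := by positivity
  have h1 : ∑ n ∈ Finset.Icc 1 M, (if d ∣ n then ∫ y in (n : ℝ)..(n + H), g (y / X) else 0)
      = ∫ s in (0 : ℝ)..H, ∑ n ∈ Finset.Icc 1 M, (if d ∣ n then g ((n + s) / X) else 0) := by
    rw [intervalIntegral.integral_finsetSum]
    · apply Finset.sum_congr rfl
      intro n _
      split_ifs with h
      · have := intervalIntegral.integral_comp_add_left (a := 0) (b := H) (fun y => g (y / X)) (n : ℝ)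
        rw [this, add_zero]
      · simp
    · intro n _
      apply Continuous.intervalIntegrable
      split_ifs
      · fun_prop
      · fun_prop
  have h2 : H * X * (∫ t, g t) / d = ∫ s in (0 : ℝ)..H, 1 / ((d : ℝ) / X) * ∫ t, g t := by
    rw [intervalIntegral.integral_const, smul_eq_mul]
    field_simp
    ring
  rw [h1, h2, ← intervalIntegral.integral_sub]
  · have := intervalIntegral.norm_integral_le_of_norm_le_const (a := 0) (b := H)
      (f := fun s => ∑ n ∈ Finset.Icc 1 M, (if d ∣ n then g ((n + s) / X) else 0) -
        1 / ((d : ℝ) / X) * ∫ t, g t)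
      (C := C * (d / X) ^ (K + 1) + B * ((H / d + 1) * (4 * H / X))) (by
        intro s hs
        rw [Set.uIoc_of_le hH] at hs
        have a1 := tsum_int_split g hgsupp B hB X H s hX hs.1.le hs.2 d M hd hM
        have a2 := hC (d / X) (by positivity) (s / X)
        rw [Real.norm_eq_abs]
        have := abs_sub_le (∑ n ∈ Finset.Icc 1 M, (if d ∣ n then g ((n + s) / X) else 0))
          (∑' m : ℤ, g (s / X + d / X * m)) (1 / ((d : ℝ) / X) * ∫ t, g t)
        linarith)
    rw [sub_zero, abs_of_nonneg hH, Real.norm_eq_abs] at this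
    linarith
  · apply Continuous.intervalIntegrable
    apply continuous_finsetSum
    intro n _
    split_ifs
    · fun_prop
    · fun_prop
  · apply Continuous.intervalIntegrable
    fun_prop

noncomputable def ind (H : ℝ) (n : ℕ) (y : ℝ) : ℝ := if y - H < n ∧ (n : ℝ) ≤ y then 1 else 0

lemma ind_eq (H : ℝ) (n : ℕ) (f : ℝ → ℝ) (y : ℝ) :
    f y * ind H n y = (Set.Ico (n : ℝ) (n + H)).indicator f y := by
  unfold ind Set.indicator
  simp only [Set.mem_Ico]
  by_cases h : y - H < n ∧ (n : ℝ) ≤ y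
  · rw [if_pos h, if_pos ⟨h.2, by linarith [h.1]⟩, mul_one]
  · rw [if_neg h, if_neg, mul_zero]
    rintro ⟨h1, h2⟩
    exact h ⟨by linarith, h1⟩

lemma ind_eq2 (H : ℝ) (n1 n2 : ℕ) (f : ℝ → ℝ) (y : ℝ) :
    f y * (ind H n1 y * ind H n2 y)
      = (Set.Ico (max (n1 : ℝ) n2) (min (n1 : ℝ) n2 + H)).indicator f y := by
  rw [← mul_assoc, ind_eq, ind_eq, Set.indicator_indicator, Set.Ico_inter_Ico, min_add_add_right]
  congr 2
  · rw [max_comm]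
  · rw [min_comm]

lemma int_ind (H : ℝ) (hH : 0 ≤ H) (n : ℕ) (f : ℝ → ℝ) :
    ∫ y, f y * ind H n y = ∫ y in (n : ℝ)..(n + H), f y := by
  simp_rw [ind_eq]
  rw [integral_indicator measurableSet_Ico, intervalIntegral.integral_of_le (by linarith),
    integral_Ico_eq_integral_Ioc]

lemma int_ind2 (g : ℝ → ℝ) (hgcont : Continuous g) (L : ℝ)
    (hL : ∀ x y, |g x - g y| ≤ L * |x - y|) (X H : ℝ) (hX : 0 < X) (hH : 0 ≤ H) (n1 n2 : ℕ) :
    |(∫ y, g (y / X) * (ind H n1 y * ind H n2 y)) - max (H - |(n1 : ℝ) - n2|) 0 * g (n1 / X)|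
      ≤ max (H - |(n1 : ℝ) - n2|) 0 * (L * H / X) := by
  have hL0 : 0 ≤ L := by
    have := hL 1 0
    have h2 := abs_nonneg (g 1 - g 0)
    norm_num at this
    linarith
  simp_rw [ind_eq2 H n1 n2 (fun y => g (y / X))]
  rw [integral_indicator measurableSet_Ico]
  set a := max (n1 : ℝ) n2 with ha
  set b := min (n1 : ℝ) n2 + H with hb
  have hw : volume.real (Set.Ico a b) = max (H - |(n1 : ℝ) - n2|) 0 := by
    rw [Real.volume_real_Ico]
    congr 1
    rw [ha, hb, ← max_sub_min_eq_abs']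
    ring
  have hc : max (H - |(n1 : ℝ) - n2|) 0 * g (n1 / X) = ∫ y in Set.Ico a b, g (n1 / X) := by
    rw [setIntegral_const, hw, smul_eq_mul]
  rw [hc, ← integral_sub]
  · have := norm_setIntegral_le_of_norm_le_const (μ := volume) (s := Set.Ico a b)
      (f := fun y => g (y / X) - g (n1 / X)) (C := L * H / X) (by simp) (by
        intro y hy
        rw [Real.norm_eq_abs]
        refine (hL _ _).trans ?_
        rw [← sub_div, abs_div, abs_of_pos hX, mul_div_assoc]
        gcongr
        rw [abs_le]
        have h1 := (le_max_left (n1 : ℝ) n2).trans hy.1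
        have h2 := hy.2.le.trans (add_le_add_left (min_le_left (n1 : ℝ) n2) H)
        constructor <;> linarith)
    rw [hw, Real.norm_eq_abs] at this
    linarith
  · exact ((by fun_prop : Continuous fun y : ℝ => g (y / X)).continuousOn (s := Set.Icc a b)).integrableOn_Icc.mono_set Set.Ico_subset_Icc_self
  · exact (continuous_const.continuousOn (s := Set.Icc a b)).integrableOn_Icc.mono_set Set.Ico_subset_Icc_self

lemma expand_sq (f : ℝ → ℝ) (hf : Integrable f) (H : ℝ) (hH : 0 ≤ H) (s : Finset ℕ) (b : ℕ → ℝ)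
    (E : ℝ) :
    ∫ y, f y * (∑ n ∈ s, b n * ind H n y - E) ^ 2
      = ∑ n1 ∈ s, ∑ n2 ∈ s, b n1 * b n2 * (∫ y, f y * (ind H n1 y * ind H n2 y))
        - 2 * E * ∑ n ∈ s, b n * (∫ y in (n : ℝ)..(n + H), f y) + E ^ 2 * ∫ y, f y := by
  have e : ∀ y, f y * (∑ n ∈ s, b n * ind H n y - E) ^ 2
      = ∑ n1 ∈ s, ∑ n2 ∈ s, b n1 * b n2 * (f y * (ind H n1 y * ind H n2 y))
        - 2 * E * ∑ n ∈ s, b n * (f y * ind H n y) + E ^ 2 * f y := by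
    intro y
    have h1 : ∑ n1 ∈ s, ∑ n2 ∈ s, b n1 * b n2 * (f y * (ind H n1 y * ind H n2 y))
        = f y * (∑ n ∈ s, b n * ind H n y) ^ 2 := by
      rw [sq, Finset.sum_mul_sum, Finset.mul_sum]
      apply Finset.sum_congr rfl; intro n1 _
      rw [Finset.mul_sum]
      apply Finset.sum_congr rfl; intro n2 _
      ring
    have h2 : ∑ n ∈ s, b n * (f y * ind H n y) = f y * ∑ n ∈ s, b n * ind H n y := by
      rw [Finset.mul_sum]
      apply Finset.sum_congr rfl; intro n2 _
      ring
    rw [h1, h2]; ring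
  have i1 : ∀ n, Integrable (fun y => f y * ind H n y) := by
    intro n
    simp_rw [ind_eq]
    exact hf.indicator measurableSet_Ico
  have i2 : ∀ n1 n2, Integrable (fun y => f y * (ind H n1 y * ind H n2 y)) := by
    intro n1 n2
    simp_rw [ind_eq2]
    exact hf.indicator measurableSet_Ico
  have j1 : Integrable (fun y => ∑ n ∈ s, b n * (f y * ind H n y)) :=
    integrable_finsetSum _ fun n _ => (i1 n).const_mul _
  have j2' : ∀ n1, Integrable (fun y => ∑ n2 ∈ s, b n1 * b n2 * (f y * (ind H n1 y * ind H n2 y))) :=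
    fun n1 => integrable_finsetSum _ fun n2 _ => (i2 n1 n2).const_mul _
  have j2 : Integrable (fun y => ∑ n1 ∈ s, ∑ n2 ∈ s, b n1 * b n2 * (f y * (ind H n1 y * ind H n2 y))) :=
    integrable_finsetSum _ fun n1 _ => j2' n1
  have j3 : Integrable (fun y => ∑ n1 ∈ s, ∑ n2 ∈ s, b n1 * b n2 * (f y * (ind H n1 y * ind H n2 y))
      - 2 * E * ∑ n ∈ s, b n * (f y * ind H n y)) := j2.sub (j1.const_mul _)
  simp_rw [e]
  rw [integral_add j3 (hf.const_mul _), integral_sub j2 (j1.const_mul _),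
    integral_const_mul, integral_const_mul, integral_finsetSum _ (fun n1 _ => j2' n1),
    integral_finsetSum _ (fun n _ => (i1 n).const_mul _)]
  congr 2
  · apply Finset.sum_congr rfl; intro n1 _
    rw [integral_finsetSum _ (fun n2 _ => (i2 n1 n2).const_mul _)]
    apply Finset.sum_congr rfl; intro n2 _
    rw [integral_const_mul]
  · congr 1
    apply Finset.sum_congr rfl; intro n _
    rw [integral_const_mul, int_ind H hH]

lemma sum_w_le (H : ℝ) (hH : 1 ≤ H) (n M : ℕ) :
    ∑ m ∈ Finset.Icc 1 M, max (H - |(n : ℝ) - m|) 0 ≤ 3 * H ^ 2 := by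
  set s := (Finset.Icc 1 M).filter (fun m : ℕ => |(n : ℝ) - m| < H) with hs
  have h1 : ∑ m ∈ Finset.Icc 1 M, max (H - |(n : ℝ) - m|) 0 ≤ ∑ m ∈ s, H := by
    rw [hs, Finset.sum_filter]
    apply Finset.sum_le_sum
    intro m _
    split_ifs with h
    · apply max_le <;> linarith [abs_nonneg ((n : ℝ) - m)]
    · apply max_le <;> linarith
  have h2 : s ⊆ Finset.Icc (n - ⌊H⌋₊) (n + ⌊H⌋₊) := by
    intro m hm
    rw [hs, Finset.mem_filter, abs_lt] at hm
    rw [Finset.mem_Icc]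
    obtain ⟨_, h3, h4⟩ := hm
    constructor
    · by_contra hc
      have : m + ⌊H⌋₊ + 1 ≤ n := by omega
      have h5 : (m : ℝ) + ⌊H⌋₊ + 1 ≤ n := by exact_mod_cast this
      linarith [Nat.lt_floor_add_one H]
    · by_contra hc
      have : n + ⌊H⌋₊ + 1 ≤ m := by omega
      have h5 : (n : ℝ) + ⌊H⌋₊ + 1 ≤ m := by exact_mod_cast this
      linarith [Nat.lt_floor_add_one H]
  have h3 : (s.card : ℝ) ≤ 2 * H + 1 := by
    have := Finset.card_le_card h2
    rw [Nat.card_Icc] at this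
    have h4 : s.card ≤ 2 * ⌊H⌋₊ + 1 := by omega
    have h5 : (s.card : ℝ) ≤ 2 * (⌊H⌋₊ : ℝ) + 1 := by exact_mod_cast h4
    linarith [Nat.floor_le (show 0 ≤ H by linarith)]
  rw [Finset.sum_const, nsmul_eq_mul] at h1
  nlinarith

lemma est_offdiag (H : ℝ) (hH : 1 ≤ H) (M : ℕ) (a : ℕ → ℝ) (J : ℕ → ℕ → ℝ) (e : ℝ) (he : 0 ≤ e)
    (hJ : ∀ n1 n2 : ℕ, |J n1 n2| ≤ max (H - |(n1 : ℝ) - n2|) 0 * e) :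
    |∑ n1 ∈ Finset.Icc 1 M, ∑ n2 ∈ Finset.Icc 1 M, a n1 * a n2 * J n1 n2|
      ≤ 3 * H ^ 2 * e * ∑ n ∈ Finset.Icc 1 M, a n ^ 2 := by
  set w : ℕ → ℕ → ℝ := fun n1 n2 => max (H - |(n1 : ℝ) - n2|) 0 with hw
  have hw0 : ∀ n1 n2, 0 ≤ w n1 n2 := fun _ _ => le_max_right _ _
  have hwc : ∀ n1 n2, w n1 n2 = w n2 n1 := fun n1 n2 => by simp only [hw, abs_sub_comm]
  have key : ∑ n1 ∈ Finset.Icc 1 M, ∑ n2 ∈ Finset.Icc 1 M, a n1 ^ 2 * w n1 n2 * e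
      ≤ 3 * H ^ 2 * e * ∑ n ∈ Finset.Icc 1 M, a n ^ 2 := by
    rw [Finset.mul_sum]
    apply Finset.sum_le_sum
    intro n1 _
    have := sum_w_le H hH n1 M
    calc ∑ n2 ∈ Finset.Icc 1 M, a n1 ^ 2 * w n1 n2 * e = a n1 ^ 2 * e * ∑ n2 ∈ Finset.Icc 1 M, w n1 n2 := by
          rw [Finset.mul_sum]
          apply Finset.sum_congr rfl; intros; ring
      _ ≤ a n1 ^ 2 * e * (3 * H ^ 2) := by gcongr
      _ = _ := by ring
  have key2 : ∑ n1 ∈ Finset.Icc 1 M, ∑ n2 ∈ Finset.Icc 1 M, a n2 ^ 2 * w n1 n2 * e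
      = ∑ n1 ∈ Finset.Icc 1 M, ∑ n2 ∈ Finset.Icc 1 M, a n1 ^ 2 * w n1 n2 * e := by
    rw [Finset.sum_comm]
    apply Finset.sum_congr rfl; intro n1 _
    apply Finset.sum_congr rfl; intro n2 _
    rw [hwc]
  calc _ ≤ ∑ n1 ∈ Finset.Icc 1 M, ∑ n2 ∈ Finset.Icc 1 M,
        (a n1 ^ 2 * w n1 n2 * e / 2 + a n2 ^ 2 * w n1 n2 * e / 2) := by
        refine (Finset.abs_sum_le_sum_abs _ _).trans (Finset.sum_le_sum fun n1 _ => ?_)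
        refine (Finset.abs_sum_le_sum_abs _ _).trans (Finset.sum_le_sum fun n2 _ => ?_)
        rw [abs_mul]
        have h1 : |a n1 * a n2| ≤ (a n1 ^ 2 + a n2 ^ 2) / 2 := by
          rw [abs_le]; constructor <;> nlinarith [sq_nonneg (a n1 - a n2), sq_nonneg (a n1 + a n2)]
        calc _ ≤ (a n1 ^ 2 + a n2 ^ 2) / 2 * (w n1 n2 * e) := by
              gcongr
              exact hJ n1 n2
          _ = _ := by ring
    _ ≤ _ := by
        simp only [Finset.sum_add_distrib, ← Finset.sum_div]
        rw [key2]
        linarith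

lemma T_identity (H : ℝ) (hH : 0 ≤ H) (M : ℕ) (a : ℕ → ℝ) (G : ℕ → ℝ) :
    ∑ n1 ∈ Finset.Icc 1 M, ∑ n2 ∈ Finset.Icc 1 M, a n1 * a n2 * (max (H - |(n1 : ℝ) - n2|) 0 * G n1)
      = ∑ k ∈ Finset.Icc (-(⌊H⌋₊ : ℤ)) ⌊H⌋₊, (H - |(k : ℝ)|) *
          ∑ n1 ∈ Finset.Icc 1 M, ∑ n2 ∈ Finset.Icc 1 M,
            (if (n1 : ℤ) = n2 + k then a n1 * a n2 * G n1 else 0) := by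
  simp only [Finset.mul_sum]
  rw [Finset.sum_comm (s := Finset.Icc (-(⌊H⌋₊ : ℤ)) ⌊H⌋₊)]
  apply Finset.sum_congr rfl; intro n1 _
  rw [Finset.sum_comm (s := Finset.Icc (-(⌊H⌋₊ : ℤ)) ⌊H⌋₊)]
  apply Finset.sum_congr rfl; intro n2 _
  have hk : ((((n1 : ℤ) - n2 : ℤ)) : ℝ) = (n1 : ℝ) - n2 := by push_cast; ring
  by_cases hm : ((n1 : ℤ) - n2) ∈ Finset.Icc (-(⌊H⌋₊ : ℤ)) ⌊H⌋₊
  · rw [Finset.sum_eq_single ((n1 : ℤ) - n2)]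
    · rw [if_pos (by ring), hk, max_eq_left]
      · ring
      · rw [Finset.mem_Icc] at hm
        have : |(n1 : ℤ) - n2| ≤ ⌊H⌋₊ := abs_le.mpr hm
        have h2 : |(n1 : ℝ) - n2| ≤ ⌊H⌋₊ := by rw [← hk]; exact_mod_cast this
        linarith [Nat.floor_le hH]
    · intro k _ hne
      rw [if_neg, mul_zero]
      intro h; apply hne; omega
    · intro h; exact absurd hm h
  · rw [Finset.sum_eq_zero]
    · rw [max_eq_right]
      · ring
      · by_contra hc
        push Not at hc
        apply hm
        rw [Finset.mem_Icc, ← abs_le]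
        have h1 : |(n1 : ℝ) - n2| = ((|(n1 : ℤ) - n2| : ℤ) : ℝ) := by push_cast; rfl
        obtain ⟨i, hi⟩ := Int.eq_ofNat_of_zero_le (abs_nonneg ((n1 : ℤ) - n2))
        rw [hi]
        rw [h1, hi] at hc
        have : i ≤ ⌊H⌋₊ := Nat.le_floor (by push_cast at hc; linarith)
        exact_mod_cast this
    · intro k hkm
      rw [if_neg, mul_zero]
      intro h
      apply hm
      rw [show (n1 : ℤ) - n2 = k by omega]; exact hkm

lemma S_eq (lam : ℕ → ℝ) (D M : ℕ) (k : ℤ) (G : ℕ → ℝ) :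
    ∑ n1 ∈ Finset.Icc 1 M, ∑ n2 ∈ Finset.Icc 1 M,
            (if (n1 : ℤ) = n2 + k then aa lam D n1 * aa lam D n2 * G n1 else 0)
      = ∑ d1 ∈ Finset.Icc 1 D, ∑ d2 ∈ Finset.Icc 1 D, lam d1 * lam d2 *
          ∑ n1 ∈ Finset.Icc 1 M, (if d1 ∣ n1 then ∑ n2 ∈ Finset.Icc 1 M, (if d2 ∣ n2 then
            (if (n1 : ℤ) = n2 + k then G n1 else 0) else 0) else 0) := by
  have e : ∀ n1 n2 : ℕ, (if (n1 : ℤ) = n2 + k then aa lam D n1 * aa lam D n2 * G n1 else 0)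
      = ∑ d1 ∈ Finset.Icc 1 D, ∑ d2 ∈ Finset.Icc 1 D, lam d1 * lam d2 *
        (if d1 ∣ n1 then (if d2 ∣ n2 then
            (if (n1 : ℤ) = n2 + k then G n1 else 0) else 0) else 0) := by
    intro n1 n2
    split_ifs with h
    · rw [aa, aa, Finset.sum_mul_sum, Finset.sum_mul]
      apply Finset.sum_congr rfl; intro d1 _
      rw [Finset.sum_mul]
      apply Finset.sum_congr rfl; intro d2 _
      split_ifs <;> ring
    · simp
  have e2 : ∀ d1 d2 : ℕ, lam d1 * lam d2 *
          ∑ n1 ∈ Finset.Icc 1 M, (if d1 ∣ n1 then ∑ n2 ∈ Finset.Icc 1 M, (if d2 ∣ n2 then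
            (if (n1 : ℤ) = n2 + k then G n1 else 0) else 0) else 0)
      = ∑ n1 ∈ Finset.Icc 1 M, ∑ n2 ∈ Finset.Icc 1 M, lam d1 * lam d2 *
        (if d1 ∣ n1 then (if d2 ∣ n2 then
            (if (n1 : ℤ) = n2 + k then G n1 else 0) else 0) else 0) := by
    intro d1 d2
    rw [Finset.mul_sum]
    apply Finset.sum_congr rfl; intro n1 _
    rw [← Finset.mul_sum]
    congr 1
    split_ifs <;> simp
  simp only [e, e2]
  rw [Finset.sum_congr rfl (fun n1 _ => Finset.sum_comm), Finset.sum_comm]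
  apply Finset.sum_congr rfl; intro d1 _
  rw [Finset.sum_congr rfl (fun n1 _ => Finset.sum_comm), Finset.sum_comm]

lemma S_zero (a : ℕ → ℝ) (M : ℕ) (G : ℕ → ℝ) :
    ∑ n1 ∈ Finset.Icc 1 M, ∑ n2 ∈ Finset.Icc 1 M,
            (if (n1 : ℤ) = n2 + (0 : ℤ) then a n1 * a n2 * G n1 else 0)
      = ∑ n ∈ Finset.Icc 1 M, G n * a n ^ 2 := by
  apply Finset.sum_congr rfl; intro n1 h1
  rw [Finset.sum_eq_single n1]
  · simp; ring
  · intro b _ hb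
    rw [if_neg]; omega
  · intro h; exact absurd h1 h

/-- Multiples over an infinite progression, restricted to a finite range. -/
lemma tsum_mul_eq (d M : ℕ) (hd : 1 ≤ d) (f : ℕ → ℝ) (hf : ∀ n, M < n → f n = 0) :
    ∑' m : ℕ, (if 1 ≤ m then f (d * m) else 0) = ∑ n ∈ Finset.Icc 1 M, (if d ∣ n then f n else 0) := by
  rw [sum_multiples M d hd f, tsum_eq_sum (s := Finset.Icc 1 (M / d))]
  · apply Finset.sum_congr rfl
    intro i hi
    rw [if_pos (Finset.mem_Icc.mp hi).1]
  · intro m hm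
    split_ifs with h1
    · apply hf
      by_contra hc
      apply hm
      rw [Finset.mem_Icc]
      refine ⟨h1, ?_⟩
      rw [Nat.le_div_iff_mul_le hd, mul_comm]
      omega
    · rfl

lemma tsum_le_floor (D₀ : ℝ) (hD : 0 ≤ D₀) (f : ℕ → ℝ) :
    ∑' d : ℕ, (if 1 ≤ d ∧ (d : ℝ) ≤ D₀ then f d else 0) = ∑ d ∈ Finset.Icc 1 ⌊D₀⌋₊, f d := by
  rw [tsum_eq_sum (s := Finset.Icc 1 ⌊D₀⌋₊)]
  · apply Finset.sum_congr rfl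
    intro d hd
    rw [Finset.mem_Icc, Nat.le_floor_iff hD] at hd
    rw [if_pos hd]
  · intro d hd
    rw [Finset.mem_Icc, Nat.le_floor_iff hD] at hd
    rw [if_neg hd]

lemma conv_F (X H D₀ : ℝ) (hD : 0 ≤ D₀) (lam : ℕ → ℝ)
    (hlam : ∀ d : ℕ, D₀ < (d : ℝ) → lam d = 0) (M : ℕ) (hM : ∀ n : ℕ, M < n → 3 * X < n)
    (hX : 0 < X) (y : ℝ) (hy : y ≤ 2 * X) :
    (∑' d : ℕ, ∑' m : ℕ, if 1 ≤ d ∧ 1 ≤ m ∧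
                y - H < (d * m : ℕ) ∧ ((d * m : ℕ) : ℝ) ≤ y then lam d else 0)
      = ∑ n ∈ Finset.Icc 1 M, aa lam ⌊D₀⌋₊ n * ind H n y := by
  have h1 : ∀ d : ℕ, (∑' m : ℕ, if 1 ≤ d ∧ 1 ≤ m ∧
                y - H < (d * m : ℕ) ∧ ((d * m : ℕ) : ℝ) ≤ y then lam d else 0)
      = if 1 ≤ d ∧ (d : ℝ) ≤ D₀ then
          ∑ n ∈ Finset.Icc 1 M, (if d ∣ n then lam d * ind H n y else 0) else 0 := by
    intro d
    split_ifs with h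
    · rw [← tsum_mul_eq d M h.1 (fun n => lam d * ind H n y)]
      · congr 1
        ext m
        unfold ind
        by_cases hm : 1 ≤ m
        · simp only [h.1, hm, true_and, if_true, mul_ite, mul_one, mul_zero]
        · simp [hm]
      · intro n hn
        have := hM n hn
        unfold ind
        rw [if_neg, mul_zero]
        rintro ⟨_, h2⟩
        linarith
    · by_cases hd : 1 ≤ d
      · have : lam d = 0 := hlam d (by by_contra hc; exact h ⟨hd, not_lt.mp hc⟩)
        simp [this]
      · simp [hd]
  simp only [h1]
  rw [tsum_le_floor D₀ hD, Finset.sum_comm]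
  apply Finset.sum_congr rfl
  intro n _
  rw [aa, Finset.sum_mul]
  apply Finset.sum_congr rfl
  intro d _
  split_ifs <;> ring

lemma conv_aa (D₀ : ℝ) (hD : 0 ≤ D₀) (lam : ℕ → ℝ)
    (hlam : ∀ d : ℕ, D₀ < (d : ℝ) → lam d = 0) (n : ℕ) (hn : 1 ≤ n) :
    ∑ d ∈ n.divisors, lam d = aa lam ⌊D₀⌋₊ n := by
  unfold aa
  rw [← Finset.sum_filter]
  symm
  apply Finset.sum_subset
  · intro d hd
    rw [Finset.mem_filter] at hd
    rw [Nat.mem_divisors]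
    exact ⟨hd.2, by omega⟩
  · intro d hd hd2
    apply hlam
    rw [Nat.mem_divisors] at hd
    by_contra hc
    apply hd2
    rw [Finset.mem_filter, Finset.mem_Icc, Nat.le_floor_iff hD]
    exact ⟨⟨Nat.pos_of_dvd_of_pos hd.1 (by omega), not_lt.mp hc⟩, hd.1⟩

lemma conv_k (H : ℝ) (hH : 0 ≤ H) (Φ : ℤ → ℝ) :
    (∑' k : ℤ, if k ≠ 0 ∧ |(k : ℝ)| ≤ H then Φ k else 0)
      = ∑ k ∈ Finset.Icc (-(⌊H⌋₊ : ℤ)) ⌊H⌋₊, if k ≠ 0 then Φ k else 0 := by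
  have hk : ∀ k : ℤ, k ∈ Finset.Icc (-(⌊H⌋₊ : ℤ)) ⌊H⌋₊ ↔ |(k : ℝ)| ≤ H := by
    intro k
    rw [Finset.mem_Icc, ← abs_le]
    obtain ⟨i, hi⟩ := Int.eq_ofNat_of_zero_le (abs_nonneg k)
    have h1 : |(k : ℝ)| = (i : ℝ) := by
      have : ((|k| : ℤ) : ℝ) = ((i : ℤ) : ℝ) := by rw [hi]
      simpa using this
    rw [h1, hi, ← Nat.le_floor_iff hH]
    exact_mod_cast Iff.rfl
  rw [tsum_eq_sum (s := Finset.Icc (-(⌊H⌋₊ : ℤ)) ⌊H⌋₊)]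
  · apply Finset.sum_congr rfl
    intro k h
    simp only [(hk k).mp h, and_true]
  · intro k h
    rw [if_neg]
    intro h2
    exact h ((hk k).mpr h2.2)

lemma conv_dd (D₀ : ℝ) (hD : 0 ≤ D₀) (V : ℕ → ℕ → ℝ) (k : ℤ) :
    (∑' d₁ : ℕ, ∑' d₂ : ℕ,
                  (if 1 ≤ d₁ ∧ 1 ≤ d₂ ∧ (d₁ : ℝ) ≤ D₀ ∧ (d₂ : ℝ) ≤ D₀ ∧
                      ((Nat.gcd d₁ d₂ : ℤ) ∣ k) then V d₁ d₂ else 0))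
      = ∑ d₁ ∈ Finset.Icc 1 ⌊D₀⌋₊, ∑ d₂ ∈ Finset.Icc 1 ⌊D₀⌋₊,
          (if (Nat.gcd d₁ d₂ : ℤ) ∣ k then V d₁ d₂ else 0) := by
  rw [← tsum_le_floor D₀ hD]
  congr 1
  ext d1
  split_ifs with h
  · rw [← tsum_le_floor D₀ hD]
    congr 1
    ext d2
    simp only [h.1, h.2, true_and]
    by_cases h2 : 1 ≤ d2 <;> by_cases h3 : (d2 : ℝ) ≤ D₀ <;> simp [h2, h3]
  · refine (tsum_congr fun d2 => ?_).trans tsum_zero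
    rw [if_neg]
    rintro ⟨a, _, b, _⟩
    exact h ⟨a, b⟩

noncomputable def Bfin (M d1 d2 : ℕ) (k : ℤ) (G : ℕ → ℝ) : ℝ :=
  ∑ n1 ∈ Finset.Icc 1 M, (if d1 ∣ n1 then ∑ n2 ∈ Finset.Icc 1 M, (if d2 ∣ n2 then
            (if (n1 : ℤ) = n2 + k then G n1 else 0) else 0) else 0)

lemma conv_B (g : ℝ → ℝ) (hgsupp : Function.support g ⊆ Set.Icc (1 / 4 : ℝ) 2)
    (X H : ℝ) (hX : 0 < X) (hHX : H ≤ X) (M : ℕ) (hM : ∀ n : ℕ, M < n → 3 * X < n)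
    (k : ℤ) (hk : |(k : ℝ)| ≤ H) (d1 d2 : ℕ) (h1 : 1 ≤ d1) (h2 : 1 ≤ d2) :
    (∑' m₁ : ℕ, ∑' m₂ : ℕ,
                          if 1 ≤ m₁ ∧ 1 ≤ m₂ ∧
                              ((d1 * m₁ : ℕ) : ℤ) = (d2 * m₂ : ℕ) + k then
                            g (((d1 * m₁ : ℕ) : ℝ) / X) else 0)
      = Bfin M d1 d2 k (fun n => g (n / X)) := by
  have hg0 : ∀ n : ℕ, 2 * X < n → g (n / X) = 0 := by
    intro n hn
    by_contra hc
    have := (hgsupp hc).2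
    rw [div_le_iff₀ hX] at this
    linarith
  unfold Bfin
  rw [← tsum_mul_eq d1 M h1 (fun n1 => ∑ n2 ∈ Finset.Icc 1 M, (if d2 ∣ n2 then
            (if (n1 : ℤ) = n2 + k then g (n1 / X) else 0) else 0))]
  · congr 1
    ext m1
    split_ifs with hm1
    · rw [← tsum_mul_eq d2 M h2 (fun n2 => (if ((d1 * m1 : ℕ) : ℤ) = n2 + k then
        g (((d1 * m1 : ℕ) : ℝ) / X) else 0))]
      · congr 1
        ext m2
        by_cases hm2 : 1 ≤ m2
        · simp only [hm1, hm2, true_and, if_true]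
        · simp [hm2]
      · intro n2 hn2
        have h3 := hM n2 hn2
        split_ifs with h
        · apply hg0
          have h4 : ((d1 * m1 : ℕ) : ℝ) = n2 + k := by exact_mod_cast h
          rw [h4]
          have := (abs_le.mp hk).1
          linarith
        · rfl
    · simp [hm1]
  · intro n hn
    have := hM n hn
    apply Finset.sum_eq_zero
    intro n2 _
    rw [hg0 n (by linarith)]
    simp

lemma Bfin_zero (M d1 d2 : ℕ) (k : ℤ) (G : ℕ → ℝ) (h : ¬ ((Nat.gcd d1 d2 : ℤ) ∣ k)) :
    Bfin M d1 d2 k G = 0 := by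
  unfold Bfin
  apply Finset.sum_eq_zero
  intro n1 _
  split_ifs with a
  · apply Finset.sum_eq_zero
    intro n2 _
    split_ifs with b c
    · exfalso
      apply h
      have e : k = (n1 : ℤ) - n2 := by omega
      rw [e]
      apply dvd_sub
      · exact_mod_cast (Nat.gcd_dvd_left d1 d2).trans a
      · exact_mod_cast (Nat.gcd_dvd_right d1 d2).trans b
    · rfl
    · rfl
  · rfl

lemma conv_S3 (g : ℝ → ℝ) (hgsupp : Function.support g ⊆ Set.Icc (1 / 4 : ℝ) 2)
    (X : ℝ) (hX : 0 < X) (M : ℕ) (hM : ∀ n : ℕ, M < n → 3 * X < n) (D₀ : ℝ) (hD : 0 ≤ D₀)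
    (lam : ℕ → ℝ) (hlam : ∀ d : ℕ, D₀ < (d : ℝ) → lam d = 0) :
    (∑' n : ℕ, if 1 ≤ n then g ((n : ℝ) / X) * (∑ d ∈ n.divisors, lam d) ^ 2 else 0)
      = ∑ n ∈ Finset.Icc 1 M, g (n / X) * aa lam ⌊D₀⌋₊ n ^ 2 := by
  rw [tsum_eq_sum (s := Finset.Icc 1 M)]
  · apply Finset.sum_congr rfl
    intro n hn
    have h := (Finset.mem_Icc.mp hn).1
    rw [if_pos h, conv_aa D₀ hD lam hlam n h]
  · intro n hn
    split_ifs with h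
    · have h1 : M < n := by
        by_contra hc
        exact hn (Finset.mem_Icc.mpr ⟨h, by omega⟩)
      have h2 := hM n h1
      have : g (n / X) = 0 := by
        by_contra hc
        have := (hgsupp hc).2
        rw [div_le_iff₀ hX] at this
        linarith
      rw [this, zero_mul]
    · rfl

lemma S2_eq (lam : ℕ → ℝ) (D M : ℕ) (H Y : ℝ) (G : ℕ → ℝ) (hH : 0 ≤ H) :
    (∑ k ∈ Finset.Icc (-(⌊H⌋₊ : ℤ)) ⌊H⌋₊, if k ≠ 0 then (H - |(k : ℝ)|) *
      ∑ d₁ ∈ Finset.Icc 1 D, ∑ d₂ ∈ Finset.Icc 1 D,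
          (if (Nat.gcd d₁ d₂ : ℤ) ∣ k then
            lam d₁ * lam d₂ * (Bfin M d₁ d₂ k G - Y / (Nat.lcm d₁ d₂ : ℝ)) else 0) else 0)
    = ∑ n1 ∈ Finset.Icc 1 M, ∑ n2 ∈ Finset.Icc 1 M,
        aa lam D n1 * aa lam D n2 * (max (H - |(n1 : ℝ) - n2|) 0 * G n1)
      - H * ∑ n ∈ Finset.Icc 1 M, G n * aa lam D n ^ 2
      - Y * (H ^ 2 * (∑ d ∈ Finset.Icc 1 D, lam d / d) ^ 2
        + 2 * ∑ d ∈ Finset.Icc 1 D, gam H d *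
            (∑ m ∈ Finset.Icc 1 D, if d ∣ m then lam m / m else 0) ^ 2
        - H * ∑ d₁ ∈ Finset.Icc 1 D, ∑ d₂ ∈ Finset.Icc 1 D,
            lam d₁ * lam d₂ / (Nat.lcm d₁ d₂ : ℝ)) := by
  rw [T_identity H hH, ← main_identity H hH, ← S_zero]
  set S : ℤ → ℝ := fun k => ∑ n1 ∈ Finset.Icc 1 M, ∑ n2 ∈ Finset.Icc 1 M,
            (if (n1 : ℤ) = n2 + k then aa lam D n1 * aa lam D n2 * G n1 else 0) with hS
  set W : ℤ → ℝ := fun k => ∑ d₁ ∈ Finset.Icc 1 D, ∑ d₂ ∈ Finset.Icc 1 D,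
          (if (Nat.gcd d₁ d₂ : ℤ) ∣ k then lam d₁ * lam d₂ / (Nat.lcm d₁ d₂ : ℝ) else 0) with hW
  have hW0 : ∑ d₁ ∈ Finset.Icc 1 D, ∑ d₂ ∈ Finset.Icc 1 D,
            lam d₁ * lam d₂ / (Nat.lcm d₁ d₂ : ℝ) = W 0 := by simp [hW]
  rw [hW0]
  have h0 : (0 : ℤ) ∈ Finset.Icc (-(⌊H⌋₊ : ℤ)) ⌊H⌋₊ := by simp
  have hin : ∀ k : ℤ, ∑ d₁ ∈ Finset.Icc 1 D, ∑ d₂ ∈ Finset.Icc 1 D,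
          (if (Nat.gcd d₁ d₂ : ℤ) ∣ k then
            lam d₁ * lam d₂ * (Bfin M d₁ d₂ k G - Y / (Nat.lcm d₁ d₂ : ℝ)) else 0)
      = S k - Y * W k := by
    intro k
    have : S k = ∑ d1 ∈ Finset.Icc 1 D, ∑ d2 ∈ Finset.Icc 1 D, lam d1 * lam d2 * Bfin M d1 d2 k G :=
      S_eq lam D M k G
    rw [this, hW]
    simp only [Finset.mul_sum, ← Finset.sum_sub_distrib]
    apply Finset.sum_congr rfl; intro d1 _
    apply Finset.sum_congr rfl; intro d2 _
    split_ifs with h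
    · ring
    · rw [Bfin_zero _ _ _ _ _ h]; ring
  simp only [hin]
  have : (∑ k ∈ Finset.Icc (-(⌊H⌋₊ : ℤ)) ⌊H⌋₊, if k ≠ 0 then (H - |(k : ℝ)|) * (S k - Y * W k) else 0)
      = ∑ k ∈ Finset.Icc (-(⌊H⌋₊ : ℤ)) ⌊H⌋₊, ((H - |(k : ℝ)|) * (S k - Y * W k)) - H * (S 0 - Y * W 0) := by
    rw [← Finset.add_sum_erase _ _ h0, ← Finset.add_sum_erase _ (fun k : ℤ => (H - |(k : ℝ)|) * (S k - Y * W k)) h0]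
    have : ∀ k ∈ (Finset.Icc (-(⌊H⌋₊ : ℤ)) ⌊H⌋₊).erase 0,
        (if k ≠ 0 then (H - |(k : ℝ)|) * (S k - Y * W k) else 0) = (H - |(k : ℝ)|) * (S k - Y * W k) := by
      intro k hk
      rw [if_pos (Finset.ne_of_mem_erase hk)]
    rw [Finset.sum_congr rfl this]
    simp
  rw [this]
  have e : ∑ k ∈ Finset.Icc (-(⌊H⌋₊ : ℤ)) ⌊H⌋₊, ((H - |(k : ℝ)|) * (S k - Y * W k))
      = ∑ k ∈ Finset.Icc (-(⌊H⌋₊ : ℤ)) ⌊H⌋₊, (H - |(k : ℝ)|) * S k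
        - Y * ∑ k ∈ Finset.Icc (-(⌊H⌋₊ : ℤ)) ⌊H⌋₊, (H - |(k : ℝ)|) * W k := by
    rw [Finset.mul_sum, ← Finset.sum_sub_distrib]
    apply Finset.sum_congr rfl; intros; ring
  rw [e]
  ring

lemma P_est (g : ℝ → ℝ) (hgcont : Continuous g)
    (hgsupp : Function.support g ⊆ Set.Icc (1 / 4 : ℝ) 2)
    (B : ℝ) (hB : ∀ t, |g t| ≤ B) (C : ℝ) (hC0 : 0 ≤ C) (K : ℕ)
    (hC : ∀ c : ℝ, 0 < c → ∀ s : ℝ,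
      |∑' m : ℤ, g (s + c * m) - 1 / c * ∫ t, g t| ≤ C * c ^ (K + 1))
    (X H : ℝ) (hX : 0 < X) (hH : 0 ≤ H) (hHX : H ≤ X) (D M : ℕ) (hM : 2 * X ≤ M)
    (hDX : (D : ℝ) ≤ X) (hDK : X * (D / X) ^ (K + 2) ≤ 1)
    (lam : ℕ → ℝ) (hl : ∀ d, |lam d| ≤ 1) :
    |∑ n ∈ Finset.Icc 1 M, aa lam D n * (∫ y in (n : ℝ)..(n + H), g (y / X))
      - H * X * (∫ t, g t) * ∑ d ∈ Finset.Icc 1 D, lam d / d| ≤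
      H * (C + 4 * B * H * (har D + 1)) := by
  have hB0 : 0 ≤ B := (abs_nonneg _).trans (hB 0)
  have e1 : ∑ n ∈ Finset.Icc 1 M, aa lam D n * (∫ y in (n : ℝ)..(n + H), g (y / X))
      = ∑ d ∈ Finset.Icc 1 D, lam d * ∑ n ∈ Finset.Icc 1 M,
          (if d ∣ n then ∫ y in (n : ℝ)..(n + H), g (y / X) else 0) := by
    simp only [aa, Finset.sum_mul, Finset.mul_sum]
    rw [Finset.sum_comm]
    apply Finset.sum_congr rfl; intro d _
    apply Finset.sum_congr rfl; intro n _
    split_ifs <;> ring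
  rw [e1, Finset.mul_sum, ← Finset.sum_sub_distrib]
  calc _ ≤ ∑ d ∈ Finset.Icc 1 D, H * (C * (D / X) ^ (K + 1) + B * ((H * (1 / d) + 1) * (4 * H / X))) := by
        refine (Finset.abs_sum_le_sum_abs _ _).trans (Finset.sum_le_sum fun d hd => ?_)
        have hd' := Finset.mem_Icc.mp hd
        have hdD : (d : ℝ) ≤ D := by exact_mod_cast hd'.2
        have h := Pd_est g hgcont hgsupp B hB C K hC X H hX hH d M hd'.1 hM
        have e : lam d * ∑ n ∈ Finset.Icc 1 M,
          (if d ∣ n then ∫ y in (n : ℝ)..(n + H), g (y / X) else 0) - H * X * (∫ t, g t) * (lam d / d)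
          = lam d * (∑ n ∈ Finset.Icc 1 M,
          (if d ∣ n then ∫ y in (n : ℝ)..(n + H), g (y / X) else 0) - H * X * (∫ t, g t) / d) := by ring
        rw [e, abs_mul]
        refine (mul_le_of_le_one_left (abs_nonneg _) (hl d)).trans (h.trans ?_)
        rw [mul_one_div]
        gcongr
    _ = H * (C * (D * (D / X) ^ (K + 1)) + B * (4 * H / X) * (H * har D + D)) := by
        unfold har
        have e : ∑ x ∈ Finset.Icc 1 D, B * ((H * (1 / (x : ℝ)) + 1) * (4 * H / X))
            = B * (4 * H / X) * (H * ∑ d ∈ Finset.Icc 1 D, 1 / (d : ℝ) + D) := by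
          have e' : ∀ x ∈ Finset.Icc 1 D, B * ((H * (1 / (x : ℝ)) + 1) * (4 * H / X))
              = B * (4 * H / X) * H * (1 / (x : ℝ)) + B * (4 * H / X) := by
            intros; ring
          rw [Finset.sum_congr rfl e', Finset.sum_add_distrib, ← Finset.mul_sum, Finset.sum_const,
            Nat.card_Icc, nsmul_eq_mul]
          simp only [Nat.add_sub_cancel]
          ring
        rw [← Finset.mul_sum, Finset.sum_add_distrib, e, Finset.sum_const,
            Nat.card_Icc, nsmul_eq_mul]
        simp only [Nat.add_sub_cancel]
        ring
    _ ≤ _ := by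
        have a1 : D * ((D : ℝ) / X) ^ (K + 1) ≤ 1 := by
          have : D * ((D : ℝ) / X) ^ (K + 1) = X * (D / X) ^ (K + 2) := by
            rw [pow_succ _ (K + 1)]; field_simp
          rw [this]; exact hDK
        have a2 : 4 * H / X * (H * har D + D) ≤ 4 * H * (har D + 1) := by
          have h0 := har_nonneg D
          rw [div_mul_eq_mul_div, div_le_iff₀ hX]
          have h5 : H * har D + D ≤ (har D + 1) * X := by nlinarith
          have h6 := mul_le_mul_of_nonneg_left h5 (show 0 ≤ 4 * H by linarith)
          linarith
        have a3 : C * (D * ((D : ℝ) / X) ^ (K + 1)) ≤ C * 1 := by gcongr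
        have a4 : B * (4 * H / X) * (H * har D + D) ≤ 4 * B * H * (har D + 1) := by
          calc _ = B * (4 * H / X * (H * har D + D)) := by ring
            _ ≤ B * (4 * H * (har D + 1)) := by gcongr
            _ = _ := by ring
        gcongr
        linarith

lemma A_est (D : ℕ) (lam : ℕ → ℝ) (hl : ∀ d, |lam d| ≤ 1) :
    |∑ d ∈ Finset.Icc 1 D, lam d / d| ≤ har D := by
  unfold har
  refine (Finset.abs_sum_le_sum_abs _ _).trans (Finset.sum_le_sum fun d _ => ?_)
  rw [abs_div, Nat.abs_cast]
  gcongr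
  exact hl d

lemma core (g : ℝ → ℝ) (hgcont : Continuous g) (hgi : Integrable g)
    (hgsupp : Function.support g ⊆ Set.Icc (1 / 4 : ℝ) 2)
    (B : ℝ) (hB : ∀ t, |g t| ≤ B) (L : ℝ) (hL0 : 0 ≤ L) (hL : ∀ x y, |g x - g y| ≤ L * |x - y|)
    (C : ℝ) (hC0 : 0 ≤ C) (K : ℕ)
    (hC : ∀ c : ℝ, 0 < c → ∀ s : ℝ,
      |∑' m : ℤ, g (s + c * m) - 1 / c * ∫ t, g t| ≤ C * c ^ (K + 1))
    (X H : ℝ) (hH2 : 2 ≤ H) (hHX : H ≤ X) (D M : ℕ) (hD1 : 1 ≤ D) (hM : 2 * X ≤ M)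
    (hM4 : (M : ℝ) ≤ 4 * X)
    (hDX : (D : ℝ) ≤ X) (hDK : X * (D / X) ^ (K + 2) ≤ 1)
    (lam : ℕ → ℝ) (hl : ∀ d, |lam d| ≤ 1) :
    |(∫ y, g (y / X) * (∑ n ∈ Finset.Icc 1 M, aa lam D n * ind H n y
        - H * ∑ d ∈ Finset.Icc 1 D, lam d / d) ^ 2)
      - ((2 * (∫ t, g t) * X * ∑ d ∈ Finset.Icc 1 D, gam H d *
            (∑ m ∈ Finset.Icc 1 D, if d ∣ m then lam m / m else 0) ^ 2)
        + (∑ k ∈ Finset.Icc (-(⌊H⌋₊ : ℤ)) ⌊H⌋₊, if k ≠ 0 then (H - |(k : ℝ)|) *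
            ∑ d₁ ∈ Finset.Icc 1 D, ∑ d₂ ∈ Finset.Icc 1 D,
              (if (Nat.gcd d₁ d₂ : ℤ) ∣ k then
                lam d₁ * lam d₂ * (Bfin M d₁ d₂ k (fun n => g (n / X))
                  - (∫ t, g t) * X / (Nat.lcm d₁ d₂ : ℝ)) else 0) else 0)
        + (H * ∑ n ∈ Finset.Icc 1 M, g (n / X) * aa lam D n ^ 2
          - (∫ t, g t) * H * X / X ^ (10 : ℕ) *
            ∑ n ∈ Finset.Icc 1 ⌊X ^ (10 : ℕ)⌋₊, aa lam D n ^ 2))|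
      ≤ (324 * L + 12 * (C + 20 * B) + 8 * |∫ t, g t| + 1) * H ^ 3 * Real.log X ^ 3 := by
  have hX2 : 2 ≤ X := hH2.trans hHX
  have hX0 : 0 < X := by linarith
  have hH0 : 0 ≤ H := by linarith
  have hB0 : 0 ≤ B := (abs_nonneg _).trans (hB 0)
  set ℓ := Real.log X with hℓ
  have hℓ1 : 1 / 2 ≤ ℓ := by
    have : Real.log 2 ≤ ℓ := Real.log_le_log (by norm_num) hX2
    linarith [Real.log_two_gt_d9]
  have hhar : har D ≤ 3 * ℓ := by
    have h1 := har_le D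
    have h2 : Real.log D ≤ ℓ := Real.log_le_log (by positivity) hDX
    linarith
  have hhar0 := har_nonneg D
  have hfi : Integrable (fun y => g (y / X)) := hgi.comp_div hX0.ne'
  have hfint : ∫ y, g (y / X) = X * ∫ t, g t := by
    rw [Measure.integral_comp_div, abs_of_pos hX0, smul_eq_mul]
  rw [expand_sq (fun y => g (y / X)) hfi H hH0, S2_eq lam D M H _ _ hH0, hfint]
  have E1 := est_offdiag H (by linarith) M (aa lam D)
    (fun n1 n2 => (∫ y, g (y / X) * (ind H n1 y * ind H n2 y))
      - max (H - |(n1 : ℝ) - n2|) 0 * g (n1 / X)) (L * H / X) (by positivity)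
    (fun n1 n2 => int_ind2 g hgcont L hL X H hX0 hH0 n1 n2)
  simp only [mul_sub, Finset.sum_sub_distrib] at E1
  have E2 := P_est g hgcont hgsupp B hB C hC0 K hC X H hX0 hH0 hHX D M hM hDX hDK lam hl
  have E3 := long_average lam hl D (X ^ 10) (by positivity)
  have hA := A_est D lam hl
  have hQ := sum_sq_aa_le lam hl D M
  generalize (∑ n1 ∈ Finset.Icc 1 M, ∑ n2 ∈ Finset.Icc 1 M, aa lam D n1 * aa lam D n2 *
    ∫ y, g (y / X) * (ind H n1 y * ind H n2 y)) = T1 at *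
  generalize (∑ n1 ∈ Finset.Icc 1 M, ∑ n2 ∈ Finset.Icc 1 M,
    aa lam D n1 * aa lam D n2 * (max (H - |(n1 : ℝ) - n2|) 0 * g (n1 / X))) = T2 at *
  generalize (∑ n ∈ Finset.Icc 1 M, aa lam D n * (∫ y in (n : ℝ)..(n + H), g (y / X))) = P at *
  generalize (∑ d ∈ Finset.Icc 1 D, lam d / (d : ℝ)) = A at *
  generalize (∑ d₁ ∈ Finset.Icc 1 D, ∑ d₂ ∈ Finset.Icc 1 D,
      lam d₁ * lam d₂ / (Nat.lcm d₁ d₂ : ℝ)) = W at *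
  generalize (∑ n ∈ Finset.Icc 1 ⌊X ^ 10⌋₊, aa lam D n ^ 2) = Q10 at *
  generalize (∑ d ∈ Finset.Icc 1 D, gam H d *
            (∑ m ∈ Finset.Icc 1 D, if d ∣ m then lam m / m else 0) ^ 2) = Γ at *
  generalize (∑ n ∈ Finset.Icc 1 M, g (n / X) * aa lam D n ^ 2) = S0 at *
  generalize (∑ n ∈ Finset.Icc 1 M, aa lam D n ^ 2) = Q at *
  generalize (∫ t, g t) = I0 at *
  generalize har D = h at *
  have key : T1 - 2 * (H * A) * P + (H * A) ^ 2 * (X * I0)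
      - (2 * I0 * X * Γ + (T2 - H * S0 - I0 * X * (H ^ 2 * A ^ 2 + 2 * Γ - H * W))
        + (H * S0 - I0 * H * X / X ^ 10 * Q10))
      = (T1 - T2) - 2 * H * A * (P - H * X * I0 * A) + I0 * H * X / X ^ 10 * (Q10 - X ^ 10 * W) := by
    field_simp
    ring
  rw [key]
  have hHl : 1 ≤ H * ℓ := by nlinarith
  have hl3 : 1 ≤ 8 * ℓ ^ 3 := by
    have : (1 / 2 : ℝ) ^ 3 ≤ ℓ ^ 3 := by gcongr
    linarith
  have hH3 : H ≤ H ^ 3 := by nlinarith [mul_self_nonneg H]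
  -- first error
  have b1 : |T1 - T2| ≤ 324 * L * H ^ 3 * ℓ ^ 3 := by
    calc |T1 - T2| ≤ 3 * H ^ 2 * (L * H / X) * Q := E1
      _ ≤ 3 * H ^ 2 * (L * H / X) * (4 * X * (3 * ℓ) ^ 3) := by
          gcongr
          refine hQ.trans ?_
          gcongr
      _ = 324 * L * H ^ 3 * ℓ ^ 3 := by field_simp; ring
  have b2 : |2 * H * A * (P - H * X * I0 * A)| ≤ 12 * (C + 20 * B) * H ^ 3 * ℓ ^ 3 := by
    rw [abs_mul, abs_mul, abs_of_nonneg (show 0 ≤ 2 * H by linarith)]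
    calc _ ≤ 2 * H * (3 * ℓ) * (H * (C * (H * ℓ) + 4 * B * H * (5 * ℓ))) := by
          gcongr
          · exact hA.trans hhar
          · refine E2.trans ?_
            gcongr
            · exact le_mul_of_one_le_right hC0 hHl
            · linarith
      _ = 6 * (C + 20 * B) * H ^ 3 * (ℓ ^ 2 * 1) := by ring
      _ ≤ 6 * (C + 20 * B) * H ^ 3 * (ℓ ^ 2 * (2 * ℓ)) := by
          gcongr
          linarith
      _ = _ := by ring
  have b3 : |I0 * H * X / X ^ 10 * (Q10 - X ^ 10 * W)| ≤ 8 * |I0| * H ^ 3 * ℓ ^ 3 := by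
    have hx : X / X ^ 10 * X ^ 2 ≤ 1 := by
      have : X / X ^ 10 * X ^ 2 = (1 / X) ^ 7 := by field_simp
      rw [this]
      apply pow_le_one₀ (by positivity)
      rw [div_le_one hX0]; linarith
    have e : I0 * H * X / X ^ 10 * (Q10 - X ^ 10 * W) = I0 * (H * (X / X ^ 10)) * (Q10 - X ^ 10 * W) := by ring
    rw [e, abs_mul, abs_mul, abs_of_nonneg (show 0 ≤ H * (X / X ^ 10) by positivity)]
    calc _ ≤ |I0| * (H * (X / X ^ 10)) * (X ^ 2) := by
          gcongr
          refine E3.trans ?_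
          gcongr
      _ = |I0| * H * (X / X ^ 10 * X ^ 2) := by ring
      _ ≤ |I0| * H ^ 3 * (8 * ℓ ^ 3) := by
          refine mul_le_mul (mul_le_mul_of_nonneg_left hH3 (abs_nonneg _)) (hx.trans hl3)
            (by positivity) (by positivity)
      _ = _ := by ring
  have b4 : 0 ≤ H ^ 3 * ℓ ^ 3 := by positivity
  calc _ ≤ |T1 - T2| + |2 * H * A * (P - H * X * I0 * A)|
        + |I0 * H * X / X ^ 10 * (Q10 - X ^ 10 * W)| := by
        refine (abs_add_le _ _).trans ?_
        gcongr
        exact abs_sub _ _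
    _ ≤ _ := by nlinarith

lemma conv_inner (D₀ : ℝ) (hD : 0 ≤ D₀) (lam : ℕ → ℝ) (d : ℕ) :
    (∑' m : ℕ, if 1 ≤ m ∧ (m : ℝ) ≤ D₀ ∧ d ∣ m then lam m / m else 0)
      = ∑ m ∈ Finset.Icc 1 ⌊D₀⌋₊, if d ∣ m then lam m / m else 0 := by
  rw [← tsum_le_floor D₀ hD]
  congr 1
  ext m
  by_cases h1 : 1 ≤ m <;> by_cases h2 : (m : ℝ) ≤ D₀ <;> simp [h1, h2]

lemma hDK_aux (δ : ℝ) (hδ : 0 < δ) (X D₀ : ℝ) (hX : 2 ≤ X) (hD0 : 2 ≤ D₀)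
    (hD : D₀ ≤ X ^ (1 - δ)) : X * ((⌊D₀⌋₊ : ℝ) / X) ^ (⌈1 / δ⌉₊ + 2) ≤ 1 := by
  have hX0 : 0 < X := by linarith
  have h1 : (⌊D₀⌋₊ : ℝ) ≤ D₀ := Nat.floor_le (by linarith)
  have h2 : (⌊D₀⌋₊ : ℝ) / X ≤ X ^ (-δ) := by
    rw [div_le_iff₀ hX0]
    calc _ ≤ X ^ (1 - δ) := h1.trans hD
      _ = X ^ (-δ) * X := by
        rw [← Real.rpow_add_one hX0.ne']; congr 1; ring
  have h3 : ((⌊D₀⌋₊ : ℝ) / X) ^ (⌈1 / δ⌉₊ + 2) ≤ X ^ (-1 : ℝ) := by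
    calc _ ≤ (X ^ (-δ)) ^ (⌈1 / δ⌉₊ + 2) := by gcongr
      _ = X ^ (-δ * ((⌈1 / δ⌉₊ + 2 : ℕ) : ℝ)) := by
        rw [Real.rpow_mul hX0.le, Real.rpow_natCast]
      _ ≤ X ^ (-1 : ℝ) := by
        apply Real.rpow_le_rpow_of_exponent_le (by linarith)
        have h4 : 1 / δ ≤ (⌈1 / δ⌉₊ : ℝ) := Nat.le_ceil _
        rw [div_le_iff₀ hδ] at h4
        push_cast
        nlinarith
  calc _ ≤ X * X ^ (-1 : ℝ) := by gcongr
    _ = 1 := by rw [Real.rpow_neg_one]; field_simp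

theorem mean_square_type_I_expansion
    (δ : ℝ) (hδ : 0 < δ) (g : ℝ → ℝ) (hg : ContDiff ℝ (⊤ : ℕ∞) g)
    (hgsupp : Function.support g ⊆ Set.Icc (1 / 4 : ℝ) 2) :
    ∃ C : ℝ, 0 < C ∧
      ∀ X H D₀ : ℝ, 2 ≤ H → H ≤ X → 2 ≤ D₀ → D₀ ≤ X ^ (1 - δ) →
      ∀ lam : ℕ → ℝ, (∀ d, |lam d| ≤ 1) → (∀ d : ℕ, D₀ < (d : ℝ) → lam d = 0) →
      |(∫ y : ℝ, g (y / X) *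
          ((∑' d : ℕ, ∑' m : ℕ, if 1 ≤ d ∧ 1 ≤ m ∧
                y - H < (d * m : ℕ) ∧ ((d * m : ℕ) : ℝ) ≤ y then lam d else 0)
            - H * ∑' d : ℕ, (if 1 ≤ d ∧ (d : ℝ) ≤ D₀ then lam d / d else 0)) ^ 2)
        - ((2 * (∫ t : ℝ, g t) * X *
              ∑' d : ℕ, (if 1 ≤ d ∧ (d : ℝ) ≤ D₀ then
                (∑' m : ℕ, if 1 ≤ m ∧ Nat.gcd m d = 1 then
                    ((d : ℝ) / (π * m) * sin (π * m * H / d)) ^ 2 else 0) *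
                (∑' m : ℕ, if 1 ≤ m ∧ (m : ℝ) ≤ D₀ ∧ d ∣ m then lam m / m else 0) ^ 2
              else 0))
          + (∑' k : ℤ, if k ≠ 0 ∧ |(k : ℝ)| ≤ H then
              (H - |(k : ℝ)|) *
                ∑' d₁ : ℕ, ∑' d₂ : ℕ,
                  (if 1 ≤ d₁ ∧ 1 ≤ d₂ ∧ (d₁ : ℝ) ≤ D₀ ∧ (d₂ : ℝ) ≤ D₀ ∧
                      ((Nat.gcd d₁ d₂ : ℤ) ∣ k) then
                    lam d₁ * lam d₂ *
                      ((∑' m₁ : ℕ, ∑' m₂ : ℕ,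
                          if 1 ≤ m₁ ∧ 1 ≤ m₂ ∧
                              ((d₁ * m₁ : ℕ) : ℤ) = (d₂ * m₂ : ℕ) + k then
                            g (((d₁ * m₁ : ℕ) : ℝ) / X) else 0)
                        - (∫ t : ℝ, g t) * X / (Nat.lcm d₁ d₂ : ℝ))
                  else 0)
            else 0)
          + (H * (∑' n : ℕ, if 1 ≤ n then
                g ((n : ℝ) / X) * (∑ d ∈ n.divisors, lam d) ^ 2 else 0)
              - (∫ t : ℝ, g t) * H * X / X ^ (10 : ℕ) *
                ∑ n ∈ Finset.Icc 1 ⌊X ^ (10 : ℕ)⌋₊, (∑ d ∈ n.divisors, lam d) ^ 2))|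
        ≤ C * H ^ 3 * Real.log X ^ 3 := by
  have hgc : HasCompactSupport g :=
    HasCompactSupport.of_support_subset_isCompact isCompact_Icc hgsupp
  have hgcont : Continuous g := hg.continuous
  have hgi : Integrable g := hgcont.integrable_of_hasCompactSupport hgc
  obtain ⟨B, hB⟩ := hgc.exists_bound_of_continuous hgcont
  have hB' : ∀ t, |g t| ≤ B := fun t => by simpa using hB t
  have hB0 : 0 ≤ B := (abs_nonneg _).trans (hB' 0)
  obtain ⟨L, hL⟩ := ContDiff.lipschitzWith_of_hasCompactSupport hgc hg (by simp)
  have hL' : ∀ x y, |g x - g y| ≤ (L : ℝ) * |x - y| := fun x y => by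
    simpa [Real.dist_eq] using hL.dist_le_mul x y
  have hL0 : (0 : ℝ) ≤ L := L.2
  obtain ⟨C, hC0, hC⟩ := quad g hg hgc ⌈1 / δ⌉₊
  refine ⟨324 * L + 12 * (C + 20 * B) + 8 * |∫ t, g t| + 1, by positivity, ?_⟩
  intro X H D₀ hH2 hHX hD2 hDX lam hl hlam
  have hX2 : 2 ≤ X := hH2.trans hHX
  have hX0 : 0 < X := by linarith
  have hH0 : 0 ≤ H := by linarith
  have hD0 : 0 ≤ D₀ := by linarith
  have hDX1 : D₀ ≤ X := by
    refine hDX.trans ?_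
    calc X ^ (1 - δ) ≤ X ^ (1 : ℝ) :=
          Real.rpow_le_rpow_of_exponent_le (by linarith) (by linarith)
      _ = X := Real.rpow_one X
  have hD1 : 1 ≤ ⌊D₀⌋₊ := by
    rw [Nat.one_le_floor_iff]; linarith
  have hDX2 : (⌊D₀⌋₊ : ℝ) ≤ X := (Nat.floor_le hD0).trans hDX1
  have hM3 : ∀ n : ℕ, ⌊4 * X⌋₊ < n → 3 * X < n := by
    intro n hn
    have := Nat.lt_of_floor_lt hn
    linarith
  have hM : 2 * X ≤ (⌊4 * X⌋₊ : ℝ) := by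
    have := Nat.lt_floor_add_one (4 * X)
    linarith
  have hM4 : (⌊4 * X⌋₊ : ℝ) ≤ 4 * X := Nat.floor_le (by linarith)
  have main := core g hgcont hgi hgsupp B hB' L hL0 hL' C hC0 ⌈1 / δ⌉₊ hC X H hH2 hHX
    ⌊D₀⌋₊ ⌊4 * X⌋₊ hD1 hM hM4 hDX2 (hDK_aux δ hδ X D₀ hX2 hD2 hDX) lam hl
  have eI : (∫ y : ℝ, g (y / X) *
          ((∑' d : ℕ, ∑' m : ℕ, if 1 ≤ d ∧ 1 ≤ m ∧
                y - H < (d * m : ℕ) ∧ ((d * m : ℕ) : ℝ) ≤ y then lam d else 0)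
            - H * ∑' d : ℕ, (if 1 ≤ d ∧ (d : ℝ) ≤ D₀ then lam d / d else 0)) ^ 2)
      = ∫ y, g (y / X) * (∑ n ∈ Finset.Icc 1 ⌊4 * X⌋₊, aa lam ⌊D₀⌋₊ n * ind H n y
        - H * ∑ d ∈ Finset.Icc 1 ⌊D₀⌋₊, lam d / d) ^ 2 := by
    congr 1
    ext y
    by_cases hy : y ≤ 2 * X
    · rw [conv_F X H D₀ hD0 lam hlam _ hM3 hX0 y hy, tsum_le_floor D₀ hD0 (fun d => lam d / d)]
    · have : g (y / X) = 0 := by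
        by_contra hc
        have := (hgsupp hc).2
        rw [div_le_iff₀ hX0] at this
        exact hy this
      rw [this, zero_mul, zero_mul]
  have e1 : (∑' d : ℕ, (if 1 ≤ d ∧ (d : ℝ) ≤ D₀ then
                (∑' m : ℕ, if 1 ≤ m ∧ Nat.gcd m d = 1 then
                    ((d : ℝ) / (π * m) * sin (π * m * H / d)) ^ 2 else 0) *
                (∑' m : ℕ, if 1 ≤ m ∧ (m : ℝ) ≤ D₀ ∧ d ∣ m then lam m / m else 0) ^ 2
              else 0))
      = ∑ d ∈ Finset.Icc 1 ⌊D₀⌋₊, gam H d *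
            (∑ m ∈ Finset.Icc 1 ⌊D₀⌋₊, if d ∣ m then lam m / m else 0) ^ 2 := by
    rw [← tsum_le_floor D₀ hD0]
    simp only [conv_inner D₀ hD0, gam]
  have e2 : (∑' k : ℤ, if k ≠ 0 ∧ |(k : ℝ)| ≤ H then
              (H - |(k : ℝ)|) *
                ∑' d₁ : ℕ, ∑' d₂ : ℕ,
                  (if 1 ≤ d₁ ∧ 1 ≤ d₂ ∧ (d₁ : ℝ) ≤ D₀ ∧ (d₂ : ℝ) ≤ D₀ ∧
                      ((Nat.gcd d₁ d₂ : ℤ) ∣ k) then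
                    lam d₁ * lam d₂ *
                      ((∑' m₁ : ℕ, ∑' m₂ : ℕ,
                          if 1 ≤ m₁ ∧ 1 ≤ m₂ ∧
                              ((d₁ * m₁ : ℕ) : ℤ) = (d₂ * m₂ : ℕ) + k then
                            g (((d₁ * m₁ : ℕ) : ℝ) / X) else 0)
                        - (∫ t : ℝ, g t) * X / (Nat.lcm d₁ d₂ : ℝ))
                  else 0)
            else 0)
      = ∑ k ∈ Finset.Icc (-(⌊H⌋₊ : ℤ)) ⌊H⌋₊, if k ≠ 0 then (H - |(k : ℝ)|) *
            ∑ d₁ ∈ Finset.Icc 1 ⌊D₀⌋₊, ∑ d₂ ∈ Finset.Icc 1 ⌊D₀⌋₊,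
              (if (Nat.gcd d₁ d₂ : ℤ) ∣ k then
                lam d₁ * lam d₂ * (Bfin ⌊4 * X⌋₊ d₁ d₂ k (fun n => g (n / X))
                  - (∫ t, g t) * X / (Nat.lcm d₁ d₂ : ℝ)) else 0) else 0 := by
    rw [← conv_k H hH0 (fun k : ℤ => (H - |(k : ℝ)|) *
            ∑ d₁ ∈ Finset.Icc 1 ⌊D₀⌋₊, ∑ d₂ ∈ Finset.Icc 1 ⌊D₀⌋₊,
              (if (Nat.gcd d₁ d₂ : ℤ) ∣ k then
                lam d₁ * lam d₂ * (Bfin ⌊4 * X⌋₊ d₁ d₂ k (fun n => g (n / X))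
                  - (∫ t, g t) * X / (Nat.lcm d₁ d₂ : ℝ)) else 0))]
    congr 1
    ext k
    by_cases hk : k ≠ 0 ∧ |(k : ℝ)| ≤ H
    · rw [if_pos hk, if_pos hk]
      congr 1
      rw [← conv_dd D₀ hD0]
      congr 1
      ext d1
      congr 1
      ext d2
      by_cases hd : 1 ≤ d1 ∧ 1 ≤ d2 ∧ (d1 : ℝ) ≤ D₀ ∧ (d2 : ℝ) ≤ D₀ ∧
                      ((Nat.gcd d1 d2 : ℤ) ∣ k)
      · rw [if_pos hd, if_pos hd,
          conv_B g hgsupp X H hX0 hHX ⌊4 * X⌋₊ hM3 k hk.2 d1 d2 hd.1 hd.2.1]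
      · rw [if_neg hd, if_neg hd]
    · rw [if_neg hk, if_neg hk]
  have e3 := conv_S3 g hgsupp X hX0 ⌊4 * X⌋₊ hM3 D₀ hD0 lam hlam
  have e4 : ∑ n ∈ Finset.Icc 1 ⌊X ^ (10 : ℕ)⌋₊, (∑ d ∈ n.divisors, lam d) ^ 2
      = ∑ n ∈ Finset.Icc 1 ⌊X ^ (10 : ℕ)⌋₊, aa lam ⌊D₀⌋₊ n ^ 2 := by
    apply Finset.sum_congr rfl
    intro n hn
    rw [conv_aa D₀ hD0 lam hlam n (Finset.mem_Icc.mp hn).1]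
  rw [eI, e1, e2, e3, e4]
  exact main
end

section
/- Fix δ ∈ (0, 1/30000]. There is a constant C(δ) such that for all sufficiently large X, setting w = X^δ and E = X^{1/1000}, for every real Y with X ≤ Y ≤ X^{10} one has Σ_{n ≤ Y} ( Σ_{e | gcd-part} ρ_e^± )² ≤ C(δ)·Y/log X for both choices of sign, where the inner sum runs over the squarefree divisors e of n all of whose prime factors are < w (i.e. over e | (n, P(w))). -/
open scoped Classical

/-- Generic (β-)sieve weight: for squarefree `d = p₁⋯p_r` with primes
`lo ≤ p_r < ⋯ < p₁ < hi` satisfying `p₁⋯p_m·p_m^β < lvl` for all `m ≤ r` of the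
prescribed parity (odd if `useOdd`, even otherwise), the weight is `μ(d)`;
otherwise it is `0` (and `1` gets weight `μ(1) = 1`). -/
noncomputable def sieveWeight (lo hi lvl : ℝ) (β : ℕ) (useOdd : Bool) (d : ℕ) : ℝ :=
  if Squarefree d ∧ (∀ p ∈ d.primeFactors, lo ≤ (p : ℝ) ∧ (p : ℝ) < hi) ∧
      (∀ m : ℕ, 1 ≤ m → m ≤ d.primeFactorsList.length →
        (if useOdd then Odd m else Even m) →
        (((d.primeFactorsList.reverse.take m).prod : ℕ) : ℝ) *
          ((d.primeFactorsList.reverse.getD (m - 1) 1 : ℕ) : ℝ) ^ β < lvl)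
  then (ArithmeticFunction.moebius d : ℝ) else 0

/-- `(k, P(lo,hi))`: the product of the distinct primes `p` of `k` with `lo ≤ p < hi`;
with `lo = 0` this is the largest squarefree divisor of `k` with all prime factors `< hi`. -/
noncomputable def gcdPart (lo hi : ℝ) (k : ℕ) : ℕ :=
  ∏ p ∈ k.primeFactors.filter (fun p : ℕ => lo ≤ (p : ℝ) ∧ (p : ℝ) < hi), p


lemma bs_abel (a g : ℕ → ℝ) (K : ℝ) (M : ℕ)
    (ha : ∀ n, 0 ≤ a n) (hA : ∀ N, ∑ n ∈ Finset.range (N+1), a n ≤ K * N)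
    (hg : ∀ n, M ≤ n → g (n+1) ≤ g n) (hg0 : 0 ≤ g M) (N : ℕ) (hN : M ≤ N) :
    ∑ n ∈ Finset.Icc M N, a n * g n + (K * N - ∑ n ∈ Finset.range (N+1), a n) * g N
      ≤ K * (M * g M) + K * ∑ n ∈ Finset.Ioc M N, g n := by
  induction N, hN using Nat.le_induction with
  | base =>
    simp only [Finset.Icc_self, Finset.sum_singleton, Finset.Ioc_self, Finset.sum_empty]
    rw [Finset.sum_range_succ]
    have : 0 ≤ (∑ n ∈ Finset.range M, a n) * g M :=
      mul_nonneg (Finset.sum_nonneg fun i _ => ha i) hg0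
    nlinarith
  | succ N hN ih =>
    rw [← Finset.insert_Icc_right_eq_Icc_add_one (by omega),
      Finset.sum_insert (by simp), Finset.sum_range_succ _ (N+1),
      ← Finset.insert_Ioc_right_eq_Ioc_add_one hN, Finset.sum_insert (by simp)]
    have h1 := hA N
    have h2 := hg N hN
    have h3 := mul_le_mul_of_nonneg_left h2 (sub_nonneg.2 h1)
    push_cast
    nlinarith

lemma bs_theta (N : ℕ) :
    ∑ n ∈ Finset.range (N+1), (if n.Prime then Real.log n else 0) ≤ Real.log 4 * N := by
  have h := Chebyshev.theta_le_log4_mul_x (x := N) (Nat.cast_nonneg N)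
  rw [Chebyshev.theta_eq_sum_Icc, Nat.floor_natCast, Finset.sum_filter] at h
  rwa [Finset.range_eq_Ico, Finset.Ico_add_one_right_eq_Icc]

lemma bs_theta_nonneg (n : ℕ) : (0:ℝ) ≤ (if n.Prime then Real.log n else 0) := by
  split_ifs
  · exact Real.log_natCast_nonneg n
  · exact le_rfl

lemma bs_mertens1 (N : ℕ) (hN : 1 ≤ N) :
    ∑ n ∈ Finset.Icc 1 N, (if n.Prime then Real.log n / n else 0)
      ≤ Real.log 4 * (1 + Real.log N) := by
  have h := bs_abel (fun n => if n.Prime then Real.log n else 0) (fun n => 1 / (n:ℝ))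
    (Real.log 4) 1 bs_theta_nonneg bs_theta ?_ (by simp) N hN
  · have h1 : 0 ≤ (Real.log 4 * N - ∑ n ∈ Finset.range (N+1),
        (if n.Prime then Real.log n else 0)) * (1 / (N:ℝ)) :=
      mul_nonneg (sub_nonneg.2 (bs_theta N)) (by positivity)
    have h2 := harmonic_le_one_add_log N
    rw [harmonic_eq_sum_Icc] at h2
    push_cast at h2
    rw [← Finset.add_sum_Ioc_eq_sum_Icc (by omega)] at h2
    have h3 : 0 ≤ Real.log 4 := Real.log_nonneg (by norm_num)
    have h4 := mul_le_mul_of_nonneg_left h2 h3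
    have h5 : ∑ n ∈ Finset.Icc 1 N, (if n.Prime then Real.log n / n else 0) =
      ∑ n ∈ Finset.Icc 1 N, (if n.Prime then Real.log n else 0) * (1 / (n:ℝ)) := by
      apply Finset.sum_congr rfl
      intro n _
      split_ifs <;> simp [div_eq_mul_inv]
    rw [h5]
    simp only [one_div, Nat.cast_one, inv_one, mul_one] at h h1 h4 ⊢
    linarith
  · intro n hn
    have : (0:ℝ) < n := by exact_mod_cast hn
    push_cast
    apply one_div_le_one_div_of_le this (by linarith)

lemma bs_sum_inv_log (M N : ℕ) (hM : 2 ≤ M) (hN : M ≤ N) :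
    ∑ n ∈ Finset.Ioc M N, 1 / ((n:ℝ) * Real.log n) ≤ Real.log (Real.log N / Real.log M) := by
  induction N, hN using Nat.le_induction with
  | base =>
    have : 0 < Real.log M := Real.log_pos (by exact_mod_cast hM)
    simp [div_self this.ne']
  | succ N hN ih =>
    rw [← Finset.insert_Ioc_right_eq_Ioc_add_one hN, Finset.sum_insert (by simp)]
    have hM' : 0 < Real.log M := Real.log_pos (by exact_mod_cast hM)
    have hN' : 0 < Real.log N := Real.log_pos (by exact_mod_cast (by omega : 1 < N))
    have hN1 : 0 < Real.log (N+1:ℕ) := Real.log_pos (by exact_mod_cast (by omega : 1 < N + 1))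
    have hNp : (0:ℝ) < N := by exact_mod_cast (by omega : 0 < N)
    have key : 1 / (((N+1:ℕ):ℝ) * Real.log (N+1:ℕ)) ≤
        Real.log (Real.log (N+1:ℕ) / Real.log N) := by
      have h1 := Real.one_sub_inv_le_log_of_pos (div_pos hN1 hN')
      have h2 := Real.one_sub_inv_le_log_of_pos (x := ((N+1:ℕ):ℝ) / N) (by positivity)
      rw [Real.log_div (by positivity) hNp.ne'] at h2
      refine le_trans ?_ h1
      rw [inv_div] at h2 ⊢
      have h3 : 1 - (N:ℝ) / (N+1:ℕ) = 1 / (N+1:ℕ) := by push_cast; field_simp; ring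
      rw [h3] at h2
      rw [← div_div, div_le_iff₀ hN1, sub_mul, div_mul_cancel₀ _ hN1.ne']
      linarith
    rw [Real.log_div hN1.ne' hM'.ne']
    rw [Real.log_div hN'.ne' hM'.ne'] at ih
    rw [Real.log_div hN1.ne' hN'.ne'] at key
    linarith

lemma bs_sum_tel (M N : ℕ) (hM : 2 ≤ M) (hN : M ≤ N) :
    ∑ n ∈ Finset.Icc M N, 1 / ((n:ℝ) * (n - 1)) ≤ 1 / ((M:ℝ) - 1) - 1 / N := by
  induction N, hN using Nat.le_induction with
  | base =>
    have : (2:ℝ) ≤ M := by exact_mod_cast hM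
    have : (M:ℝ) - 1 ≠ 0 := by linarith
    simp only [Finset.Icc_self, Finset.sum_singleton]
    apply le_of_eq; field_simp; ring
  | succ N hN ih =>
    rw [← Finset.insert_Icc_right_eq_Icc_add_one (by omega), Finset.sum_insert (by simp)]
    have : (0:ℝ) < N := by exact_mod_cast (by omega : 0 < N)
    have : 1 / (((N+1:ℕ):ℝ) * ((N+1:ℕ) - 1)) = 1 / N - 1 / (N+1:ℕ) := by
      push_cast
      rw [add_sub_cancel_right]
      field_simp
      ring
    linarith

lemma bs_log4_lt : Real.log 4 ≤ 3 / 2 := by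
  have : (4:ℝ) = 2 ^ 2 := by norm_num
  rw [this, Real.log_pow]
  have := Real.log_two_lt_d9
  push_cast; linarith

/-- upper bound for `∑ 1/(q-1)`, of Mertens type with a worse constant -/
lemma bs_mertens2 (M N : ℕ) (hM : 2 ≤ M) (hN : M ≤ N) :
    ∑ n ∈ Finset.Icc M N, (if n.Prime then 1 / ((n:ℝ) - 1) else 0)
      ≤ 3 / 2 * Real.log (Real.log N / Real.log M) + 4 := by
  have hM' : 0 < Real.log M := Real.log_pos (by exact_mod_cast hM)
  have hlp : ∀ n : ℕ, M ≤ n → 0 < Real.log n := fun n hn =>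
    Real.log_pos (by exact_mod_cast (by omega : 1 < n))
  have h := bs_abel (fun n => if n.Prime then Real.log n else 0)
    (fun n => 1 / ((n:ℝ) * Real.log n))
    (Real.log 4) M bs_theta_nonneg bs_theta ?_ (by positivity) N hN
  · have h1 : 0 ≤ (Real.log 4 * N - ∑ n ∈ Finset.range (N+1),
        (if n.Prime then Real.log n else 0)) * (1 / ((N:ℝ) * Real.log N)) :=
      mul_nonneg (sub_nonneg.2 (bs_theta N)) (by have := hlp N hN; positivity)
    have h2 := bs_sum_inv_log M N hM hN
    have h3 := bs_sum_tel M N hM hN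
    have hMr : (2:ℝ) ≤ M := by exact_mod_cast hM
    have h4 : 1 / ((M:ℝ) - 1) ≤ 1 := by
      rw [div_le_one (by linarith)]; linarith
    have h5 : (0:ℝ) ≤ 1 / N := by positivity
    have h6 : ∑ n ∈ Finset.Icc M N, (if n.Prime then 1 / ((n:ℝ) - 1) else 0) ≤
        ∑ n ∈ Finset.Icc M N, ((if n.Prime then Real.log n else 0) *
          (1 / ((n:ℝ) * Real.log n)) + 1 / ((n:ℝ) * (n - 1))) := by
      apply Finset.sum_le_sum
      intro n hn
      rw [Finset.mem_Icc] at hn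
      have hl := hlp n hn.1
      have hn2 : (2:ℝ) ≤ n := by exact_mod_cast (by omega : 2 ≤ n)
      have hn1 : (0:ℝ) < (n:ℝ) - 1 := by linarith
      split_ifs
      · apply le_of_eq; field_simp; ring
      · simp only [zero_mul, zero_add]; positivity
    rw [Finset.sum_add_distrib] at h6
    have h7 : Real.log 4 * (M * (1 / ((M:ℝ) * Real.log M))) ≤ 2 := by
      have : (M:ℝ) * (1 / ((M:ℝ) * Real.log M)) = 1 / Real.log M := by
        field_simp
      rw [this, mul_one_div, div_le_iff₀ hM']
      have : (4:ℝ) = 2 ^ 2 := by norm_num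
      rw [this, Real.log_pow]
      have := Real.log_le_log (by norm_num) hMr
      push_cast; linarith
    have h8 : 0 ≤ Real.log (Real.log N / Real.log M) := by
      apply Real.log_nonneg
      rw [one_le_div hM']
      exact Real.log_le_log (by linarith) (by exact_mod_cast hN)
    have h9 : Real.log 4 * ∑ n ∈ Finset.Ioc M N, 1 / ((n:ℝ) * Real.log n) ≤
        3 / 2 * Real.log (Real.log N / Real.log M) :=
      mul_le_mul bs_log4_lt h2 (Finset.sum_nonneg fun n _ => by
        have := Real.log_natCast_nonneg n; positivity) (by norm_num)
    linarith
  · intro n hn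
    have hl := hlp n hn
    have hn2 : (2:ℝ) ≤ n := by exact_mod_cast (by omega : 2 ≤ n)
    apply one_div_le_one_div_of_le (by positivity)
    apply mul_le_mul _ _ hl.le (by positivity)
    · push_cast; linarith
    · exact Real.log_le_log (by linarith) (by push_cast; linarith)

/-- the multiplicative function `∏_{q ∣ n} h q` -/
noncomputable def bsF (h : ℕ → ℝ) (n : ℕ) : ℝ := ∏ q ∈ n.primeFactors, h q

lemma bsF_nonneg (h : ℕ → ℝ) (h0 : ∀ q, 0 ≤ h q) (n : ℕ) : 0 ≤ bsF h n :=
  Finset.prod_nonneg fun q _ => h0 q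

lemma bsF_mul (h : ℕ → ℝ) {m n : ℕ} (hmn : m.Coprime n) :
    bsF h (m * n) = bsF h m * bsF h n := by
  unfold bsF
  rw [hmn.primeFactors_mul, Finset.prod_union hmn.disjoint_primeFactors]

lemma bsF_primePow_mul (h : ℕ → ℝ) (h0 : ∀ q, 0 ≤ h q) (h8 : ∀ q, h q ≤ 8)
    {d m : ℕ} (hd : IsPrimePow d) (hm : m ≠ 0) : bsF h (d * m) ≤ 8 * bsF h m := by
  obtain ⟨q, k, hq, hk, rfl⟩ := hd
  have hq' := hq.nat_prime
  have hm0 := bsF_nonneg h h0 m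
  by_cases hqm : q ∈ m.primeFactors
  · have : bsF h (q ^ k * m) = bsF h m := by
      unfold bsF
      rw [Nat.primeFactors_mul (pow_ne_zero _ hq'.ne_zero) hm,
        Nat.primeFactors_prime_pow hk.ne' hq', Finset.union_eq_right.2 (by simpa using hqm)]
    rw [this]; linarith
  · have hc : (q ^ k).Coprime m := by
      apply Nat.Coprime.pow_left
      rw [hq'.coprime_iff_not_dvd]
      intro hdiv
      exact hqm (Nat.mem_primeFactors.2 ⟨hq', hdiv, hm⟩)
    rw [bsF_mul h hc]
    apply mul_le_mul_of_nonneg_right _ hm0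
    unfold bsF
    rw [Nat.primeFactors_prime_pow hk.ne' hq', Finset.prod_singleton]
    exact h8 q

lemma bsF_log_sum (h : ℕ → ℝ) (h0 : ∀ q, 0 ≤ h q) (h8 : ∀ q, h q ≤ 8) (N : ℕ) :
    ∑ n ∈ Finset.Ioc 0 N, bsF h n * Real.log n ≤
      48 * N * ∑ n ∈ Finset.Ioc 0 N, bsF h n / n := by
  let F : ArithmeticFunction ℝ := ⟨fun n => if n = 0 then 0 else bsF h n, by simp⟩
  have hF : ∀ n, n ≠ 0 → F n = bsF h n := fun n hn => by simp [F, hn]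
  have h1 : ∀ n ∈ Finset.Ioc 0 N, bsF h n * Real.log n ≤
      8 * (F * ArithmeticFunction.vonMangoldt) n := by
    intro n hn
    have hn0 : n ≠ 0 := by have := Finset.mem_Ioc.1 hn; omega
    rw [← ArithmeticFunction.vonMangoldt_sum, ArithmeticFunction.mul_apply,
      ← Nat.sum_divisorsAntidiagonal' (fun _ e => ArithmeticFunction.vonMangoldt e),
      Finset.mul_sum, Finset.mul_sum]
    apply Finset.sum_le_sum
    rintro ⟨m, d⟩ hx
    have hx' := Nat.mem_divisorsAntidiagonal.1 hx
    simp only at hx' ⊢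
    have hm : m ≠ 0 := by rintro rfl; simp at hx'; omega
    rw [hF m hm]
    by_cases hd : IsPrimePow d
    · have := bsF_primePow_mul h h0 h8 hd hm
      rw [mul_comm d m, hx'.1] at this
      have := mul_le_mul_of_nonneg_right this (ArithmeticFunction.vonMangoldt_nonneg (n := d))
      linarith
    · simp [ArithmeticFunction.vonMangoldt_apply, hd]
  refine (Finset.sum_le_sum h1).trans ?_
  rw [← Finset.mul_sum, ArithmeticFunction.sum_Ioc_mul_eq_sum_sum, Finset.mul_sum, Finset.mul_sum]
  apply Finset.sum_le_sum
  intro n hn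
  have hn0 : n ≠ 0 := by have := Finset.mem_Ioc.1 hn; omega
  rw [hF n hn0]
  have hp := Chebyshev.psi_le_const_mul_self (x := ((N / n : ℕ) : ℝ)) (Nat.cast_nonneg _)
  rw [Chebyshev.psi, Nat.floor_natCast] at hp
  have h4 : Real.log 4 ≤ 2 := by
    have : (4:ℝ) = 2 ^ 2 := by norm_num
    rw [this, Real.log_pow]
    have := Real.log_two_lt_d9
    push_cast; linarith
  have hdiv : ((N / n : ℕ) : ℝ) ≤ N / n := Nat.cast_div_le
  have hf := bsF_nonneg h h0 n
  have : ∑ m ∈ Finset.Ioc 0 (N / n), ArithmeticFunction.vonMangoldt m ≤ 6 * ((N:ℝ) / n) := by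
    refine hp.trans ?_
    apply mul_le_mul (by linarith) hdiv (by positivity) (by norm_num)
  have := mul_le_mul_of_nonneg_left this hf
  calc _ ≤ 8 * (bsF h n * (6 * ((N:ℝ) / n))) := by linarith
    _ = _ := by ring

lemma bsF_sum_le (h : ℕ → ℝ) (h0 : ∀ q, 0 ≤ h q) (h8 : ∀ q, h q ≤ 8) (N : ℕ) :
    Real.log N * ∑ n ∈ Finset.Ioc 0 N, bsF h n ≤
      49 * N * ∑ n ∈ Finset.Ioc 0 N, bsF h n / n := by
  have h1 := bsF_log_sum h h0 h8 N
  have h2 : ∑ n ∈ Finset.Ioc 0 N, bsF h n * (Real.log N - Real.log n) ≤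
      N * ∑ n ∈ Finset.Ioc 0 N, bsF h n / n := by
    rw [Finset.mul_sum]
    apply Finset.sum_le_sum
    intro n hn
    have hn' := Finset.mem_Ioc.1 hn
    have hn0 : (0:ℝ) < n := by exact_mod_cast hn'.1
    have hN0 : (0:ℝ) < N := by exact_mod_cast (by omega : 0 < N)
    have hf := bsF_nonneg h h0 n
    rw [← Real.log_div hN0.ne' hn0.ne']
    have : Real.log (N / n) ≤ (N:ℝ) / n := (Real.log_le_sub_one_of_pos (by positivity)).trans
      (by linarith)
    calc _ ≤ bsF h n * ((N:ℝ) / n) := mul_le_mul_of_nonneg_left this hf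
      _ = _ := by ring
  have h3 : Real.log N * ∑ n ∈ Finset.Ioc 0 N, bsF h n =
    ∑ n ∈ Finset.Ioc 0 N, bsF h n * (Real.log N - Real.log n) +
      ∑ n ∈ Finset.Ioc 0 N, bsF h n * Real.log n := by
    rw [Finset.mul_sum, ← Finset.sum_add_distrib]
    exact Finset.sum_congr rfl fun n _ => by ring
  rw [h3]; linarith

lemma bsF_euler (h : ℕ → ℝ) (h0 : ∀ q, 0 ≤ h q) (N : ℕ) :
    ∑ n ∈ Finset.Ioc 0 N, bsF h n / n ≤
      Real.exp (∑ n ∈ Finset.Icc 2 N, if n.Prime then h n / ((n:ℝ) - 1) else 0) := by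
  let f : ℕ → ℝ := fun n => bsF h n / n
  have hf0 : ∀ n, 0 ≤ f n := fun n => div_nonneg (bsF_nonneg h h0 n) (Nat.cast_nonneg n)
  have hf1 : f 1 = 1 := by simp [f, bsF]
  have hmul : ∀ {m n : ℕ}, m.Coprime n → f (m * n) = f m * f n := by
    intro m n hmn
    simp only [f]
    rw [bsF_mul h hmn]; push_cast; rw [mul_div_mul_comm]
  have hpp : ∀ {p : ℕ}, p.Prime → HasSum (fun k => f (p ^ k)) (1 + h p / ((p:ℝ) - 1)) := by
    intro p hp
    have hp2 : (2:ℝ) ≤ p := by exact_mod_cast hp.two_le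
    rw [add_comm]
    have e : ∀ k, f (p ^ (k+1)) = h p / p * ((p:ℝ)⁻¹) ^ k := by
      intro k
      simp only [f, bsF]
      rw [Nat.primeFactors_prime_pow (by omega) hp, Finset.prod_singleton]
      push_cast
      rw [inv_pow]; field_simp; ring
    have hg := (hasSum_geometric_of_lt_one (r := (p:ℝ)⁻¹) (by positivity)
      (inv_lt_one_of_one_lt₀ (by linarith))).mul_left (h p / p)
    simp_rw [← e] at hg
    have e2 : h p / p * (1 - (p:ℝ)⁻¹)⁻¹ = h p / ((p:ℝ) - 1) := by
      have : (p:ℝ) - 1 ≠ 0 := by linarith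
      field_simp
    rw [e2] at hg
    have := (hasSum_nat_add_iff (f := fun k => f (p ^ k)) 1).1 hg
    simpa [hf1] using this
  obtain ⟨hs, hsum⟩ := EulerProduct.summable_and_hasSum_smoothNumbers_prod_primesBelow_tsum
    hf1 hmul (fun {p} hp => by simpa only [Real.norm_eq_abs, abs_of_nonneg (hf0 _)]
      using (hpp hp).summable) (N+1)
  have h1 : ∑ n ∈ Finset.Ioc 0 N, f n ≤ ∏ p ∈ (N+1).primesBelow, ∑' n : ℕ, f (p ^ n) := by
    have hh := (hasSum_subtype_iff_indicator (s := ((N+1).smoothNumbers : Set ℕ))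
      (f := f)).1 hsum
    have := sum_le_hasSum (Finset.Ioc 0 N)
      (fun i _ => Set.indicator_nonneg (fun x _ => hf0 x) i) hh
    refine le_trans (le_of_eq ?_) this
    apply Finset.sum_congr rfl
    intro n hn
    have hn' := Finset.mem_Ioc.1 hn
    rw [Set.indicator_of_mem (Nat.mem_smoothNumbers_of_lt hn'.1 (by omega))]
  refine h1.trans ?_
  rw [Real.exp_sum]
  have h2 : ∏ n ∈ Finset.Icc 2 N, Real.exp (if n.Prime then h n / ((n:ℝ) - 1) else 0) =
      ∏ p ∈ (N+1).primesBelow, Real.exp (h p / ((p:ℝ) - 1)) := by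
    have : (N+1).primesBelow = (Finset.Icc 2 N).filter Nat.Prime := by
      ext p
      simp only [Nat.mem_primesBelow, Finset.mem_filter, Finset.mem_Icc]
      constructor
      · rintro ⟨a, b⟩; exact ⟨⟨b.two_le, by omega⟩, b⟩
      · rintro ⟨⟨_, a⟩, b⟩; exact ⟨by omega, b⟩
    rw [this, Finset.prod_filter]
    apply Finset.prod_congr rfl
    intro n _
    split_ifs <;> simp
  rw [h2]
  apply Finset.prod_le_prod
  · intro p _; exact tsum_nonneg fun k => hf0 _
  · intro p hp
    rw [(hpp (Nat.mem_primesBelow.1 hp).2).tsum_eq, add_comm]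
    exact Real.add_one_le_exp _

/-- local weights -/
noncomputable def bsH (M W q : ℕ) : ℝ := if q < M then 0 else if q < W then 8 else 1

lemma bsH_nonneg (M W q : ℕ) : 0 ≤ bsH M W q := by
  unfold bsH; split_ifs <;> norm_num

lemma bsH_le (M W q : ℕ) : bsH M W q ≤ 8 := by
  unfold bsH; split_ifs <;> norm_num

lemma bsH_sum (M W N : ℕ) (hM : 2 ≤ M) (hMW : M ≤ W) :
    (∑ n ∈ Finset.Icc 2 N, if n.Prime then bsH M W n / ((n:ℝ) - 1) else 0) ≤
      8 * (∑ n ∈ Finset.Icc M (W-1), if n.Prime then 1 / ((n:ℝ) - 1) else 0) +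
      ∑ n ∈ Finset.Icc W N, if n.Prime then 1 / ((n:ℝ) - 1) else 0 := by
  let t : ℕ → ℝ := fun n => if n.Prime then 1 / ((n:ℝ) - 1) else 0
  have ht : ∀ n, 0 ≤ t n := by
    intro n
    simp only [t]
    split_ifs with h
    · have : (2:ℝ) ≤ n := by exact_mod_cast h.two_le
      apply div_nonneg <;> linarith
    · exact le_rfl
  have h1 : ∀ n ∈ Finset.Icc 2 N, (if n.Prime then bsH M W n / ((n:ℝ) - 1) else 0) =
      8 * (if n ∈ Finset.Icc M (W-1) then t n else 0) +
        (if n ∈ Finset.Icc W N then t n else 0) := by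
    intro n hn
    have hn' := Finset.mem_Icc.1 hn
    simp only [Finset.mem_Icc, t, bsH]
    by_cases hp : n.Prime
    · simp only [hp, if_true]
      by_cases h2 : n < M
      · rw [if_pos h2, if_neg (by omega), if_neg (by omega)]; simp
      · rw [if_neg h2]
        by_cases h3 : n < W
        · rw [if_pos h3, if_pos (by omega), if_neg (by omega)]; ring
        · rw [if_neg h3, if_neg (by omega), if_pos (by omega)]; ring
    · simp [hp]
  rw [Finset.sum_congr rfl h1, Finset.sum_add_distrib, ← Finset.mul_sum]
  have key : ∀ A B : Finset ℕ, (∑ n ∈ A, if n ∈ B then t n else 0) ≤ ∑ n ∈ B, t n := by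
    intro A B
    rw [← Finset.sum_filter (fun n => n ∈ B) t]
    apply Finset.sum_le_sum_of_subset_of_nonneg
    · intro n hn; exact (Finset.mem_filter.1 hn).2
    · intro n _ _; exact ht n
  exact add_le_add (mul_le_mul_of_nonneg_left (key _ _) (by norm_num)) (key _ _)

lemma bs_exp_le (W N : ℕ) (hW : 2 ≤ W) (hWN : W ≤ N) (R : ℝ)
    (hR : Real.log N ≤ R * Real.log W) :
    Real.exp (∑ n ∈ Finset.Icc W N, if n.Prime then 1 / ((n:ℝ) - 1) else 0) ≤
      R ^ 2 * Real.exp 4 := by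
  have h := bs_mertens2 W N hW hWN
  have hW0 : 0 < Real.log W := Real.log_pos (by exact_mod_cast hW)
  have hle : Real.log W ≤ Real.log N :=
    Real.log_le_log (by exact_mod_cast (by omega : 0 < W)) (by exact_mod_cast hWN)
  have h1 : 1 ≤ Real.log N / Real.log W := by rwa [one_le_div hW0]
  have h2 : Real.log N / Real.log W ≤ R := by rwa [div_le_iff₀ hW0]
  have h3 : 0 ≤ Real.log (Real.log N / Real.log W) := Real.log_nonneg h1
  calc _ ≤ Real.exp (((2:ℕ):ℝ) * Real.log (Real.log N / Real.log W) + 4) := by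
        apply Real.exp_le_exp.2; push_cast; linarith
    _ = (Real.log N / Real.log W) ^ 2 * Real.exp 4 := by
        rw [Real.exp_add, ← Real.log_pow, Real.exp_log (by positivity)]
    _ ≤ _ := by gcongr

lemma bs_T1 (W N : ℕ) (hW : 2 ≤ W) (hWN : W ≤ N) (R : ℝ)
    (hR : Real.log N ≤ R * Real.log W) :
    Real.log N * ∑ n ∈ Finset.Ioc 0 N, bsF (bsH W W) n ≤ 49 * N * (R ^ 2 * Real.exp 4) := by
  refine (bsF_sum_le _ (bsH_nonneg W W) (bsH_le W W) N).trans ?_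
  apply mul_le_mul_of_nonneg_left _ (by positivity)
  refine (bsF_euler _ (bsH_nonneg W W) N).trans ?_
  refine le_trans (Real.exp_le_exp.2 (bsH_sum W W N hW le_rfl)) ?_
  rw [Finset.Icc_eq_empty (by omega), Finset.sum_empty, mul_zero, zero_add]
  exact bs_exp_le W N hW hWN R hR

lemma bs_T2 (M W N : ℕ) (hM : 2 ≤ M) (hMW : M < W) (hWN : W ≤ N) (R u : ℝ)
    (hR : Real.log N ≤ R * Real.log W) (hu : Real.log (W-1:ℕ) ≤ u * Real.log M) :
    Real.log N * ∑ n ∈ Finset.Ioc 0 N, bsF (bsH M W) n ≤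
      49 * N * ((u ^ 12 * Real.exp 32) * (R ^ 2 * Real.exp 4)) := by
  refine (bsF_sum_le _ (bsH_nonneg M W) (bsH_le M W) N).trans ?_
  apply mul_le_mul_of_nonneg_left _ (by positivity)
  refine (bsF_euler _ (bsH_nonneg M W) N).trans ?_
  refine le_trans (Real.exp_le_exp.2 (bsH_sum M W N hM hMW.le)) ?_
  rw [Real.exp_add]
  have hu12 : (0:ℝ) ≤ u ^ 12 := by rw [show 12 = 2 * 6 by norm_num, pow_mul]; positivity
  apply mul_le_mul _ (bs_exp_le W N (by omega) hWN R hR) (Real.exp_nonneg _) (by positivity)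
  have h := bs_mertens2 M (W-1) hM (by omega)
  have hM0 : 0 < Real.log M := Real.log_pos (by exact_mod_cast hM)
  have hle : Real.log M ≤ Real.log (W-1:ℕ) :=
    Real.log_le_log (by exact_mod_cast (by omega : 0 < M)) (by exact_mod_cast (by omega))
  have h1 : 1 ≤ Real.log (W-1:ℕ) / Real.log M := by rwa [one_le_div hM0]
  have h2 : Real.log (W-1:ℕ) / Real.log M ≤ u := by rwa [div_le_iff₀ hM0]
  calc _ ≤ Real.exp (((12:ℕ):ℝ) * Real.log (Real.log (W-1:ℕ) / Real.log M) + 32) := by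
        apply Real.exp_le_exp.2; push_cast at h ⊢; linarith
    _ = (Real.log (W-1:ℕ) / Real.log M) ^ 12 * Real.exp 32 := by
        rw [Real.exp_add, ← Real.log_pow, Real.exp_log (by positivity)]
    _ ≤ _ := by gcongr

lemma bs_core (x : ℕ → ℝ) (hx : Antitone x) (L : ℝ) (hL : 0 ≤ L) (h0 : 30 * x 0 ≤ L) (r : ℕ)
    (hc : ∀ m, 1 ≤ m → m < r → m % 2 = r % 2 →
      ∑ i ∈ Finset.range m, x i + 30 * x (m-1) ≤ L) :
    ∀ m, m ≤ r → m % 2 = r % 2 →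
      (14/15 : ℝ) ^ ((m+1)/2) * L ≤ L - ∑ i ∈ Finset.range m, x i := by
  intro m
  induction m using Nat.strong_induction_on with
  | _ m ih =>
    intro hmr hpar
    rcases m with _ | _ | _ | k
    · simp
    · simp; linarith
    · simp [Finset.sum_range_succ]
      have := hx (show 0 ≤ 1 by norm_num)
      linarith
    · have h1 := ih (k+1) (by omega) (by omega) (by omega)
      have h2 := hc (k+1) (by omega) (by omega) (by omega)
      rw [Nat.add_sub_cancel] at h2
      have e : (k + 1 + 1 + 1 + 1) / 2 = (k + 1 + 1) / 2 + 1 := by omega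
      rw [e, pow_succ, Finset.sum_range_succ, Finset.sum_range_succ _ (k+1)]
      have a1 := hx (show k ≤ k + 1 by omega)
      have a2 := hx (show k ≤ k + 1 + 1 by omega)
      linarith

lemma bs_log_take (l : List ℕ) (h1 : ∀ a ∈ l, 1 ≤ a) (m : ℕ) :
    Real.log ((l.take m).prod : ℕ) = ∑ i ∈ Finset.range m, Real.log (l.getD i 1 : ℕ) := by
  induction m with
  | zero => simp
  | succ m ih =>
    rw [List.take_add_one, List.prod_append, Finset.sum_range_succ, ← ih, Nat.cast_mul,
      Real.log_mul]
    · congr 2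
      rw [List.getD_eq_getElem?_getD]
      rcases l[m]? with _ | a <;> simp
    · have : 0 ∉ l.take m := fun h => by have := h1 0 (List.mem_of_mem_take h); omega
      exact_mod_cast List.prod_ne_zero this
    · have : 0 ∉ l[m]?.toList := fun h => by
        have := h1 0 (List.mem_of_getElem? (by simpa using h)); omega
      exact_mod_cast List.prod_ne_zero this

lemma bs_list (l : List ℕ) (hs : l.Pairwise (· ≥ ·)) (h1 : ∀ a ∈ l, 1 ≤ a) (w E : ℝ)
    (hw1 : 1 < w) (hw : ∀ a ∈ l, (a:ℝ) < w) (hE : w ^ 30 ≤ E) (useOdd : Bool)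
    (hpos : 1 ≤ l.length)
    (hpar : if useOdd then Odd l.length else Even l.length)
    (hc : ∀ m, 1 ≤ m → m < l.length → (if useOdd then Odd m else Even m) →
      ((l.take m).prod : ℕ) * ((l.getD (m-1) 1 : ℕ) : ℝ) ^ 30 < E)
    (hfail : E ≤ ((l.take l.length).prod : ℕ) * ((l.getD (l.length-1) 1 : ℕ) : ℝ) ^ 30) :
    (14/15 : ℝ) ^ ((l.length+1)/2) * Real.log w ≤ Real.log (l.getD (l.length-1) 1 : ℕ) := by
  set x : ℕ → ℝ := fun i => Real.log (l.getD i 1 : ℕ) with hxdef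
  have hget1 : ∀ i, 1 ≤ l.getD i 1 := by
    intro i
    rw [List.getD_eq_getElem?_getD]
    rcases h : l[i]? with _ | a
    · simp
    · simpa using h1 a (List.mem_of_getElem? h)
  have hx : Antitone x := by
    apply antitone_nat_of_succ_le
    intro i
    apply Real.log_le_log (by exact_mod_cast hget1 _)
    norm_cast
    by_cases hi : i + 1 < l.length
    · rw [List.getD_eq_getElem _ _ hi, List.getD_eq_getElem _ _ (by omega)]
      exact List.pairwise_iff_getElem.1 hs i (i+1) (by omega) hi (by omega)
    · rw [List.getD_eq_default _ _ (by omega)]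
      exact hget1 i
  have hlw : 0 < Real.log w := Real.log_pos hw1
  have hwE : 30 * Real.log w ≤ Real.log E := by
    have := Real.log_le_log (by positivity) hE
    rw [Real.log_pow] at this
    exact_mod_cast this
  have hE0 : 0 < E := lt_of_lt_of_le (by positivity) hE
  have h0 : 30 * x 0 ≤ Real.log E := by
    have : x 0 ≤ Real.log w := by
      apply Real.log_le_log (by exact_mod_cast hget1 _)
      rw [List.getD_eq_getElem _ _ (by omega)]
      exact (hw _ (List.getElem_mem _)).le
    linarith
  have hprod : ∀ m, 1 ≤ (l.take m).prod := by
    intro m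
    apply Nat.one_le_iff_ne_zero.2
    apply List.prod_ne_zero
    intro h
    have := h1 0 (List.mem_of_mem_take h); omega
  have hlog : ∀ m, Real.log (((l.take m).prod : ℕ) * ((l.getD (m-1) 1 : ℕ) : ℝ) ^ 30) =
      ∑ i ∈ Finset.range m, x i + 30 * x (m-1) := by
    intro m
    have a1 : (0:ℝ) < ((l.take m).prod : ℕ) := by exact_mod_cast hprod m
    have a2 : (0:ℝ) < (l.getD (m-1) 1 : ℕ) := by exact_mod_cast hget1 (m-1)
    rw [Real.log_mul a1.ne' (by positivity), Real.log_pow, bs_log_take l h1]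
    simp [hxdef]
  have hmain := bs_core x hx (Real.log E) (by linarith) h0 l.length (by
    intro m hm1 hmr hm2
    have hgood : if useOdd then Odd m else Even m := by
      cases useOdd
      · simp only [Bool.false_eq_true, if_false] at hpar ⊢
        rw [Nat.even_iff] at *; omega
      · simp only [if_true] at hpar ⊢
        rw [Nat.odd_iff] at *; omega
    have := hc m hm1 hmr hgood
    rw [← hlog]
    apply Real.log_le_log _ this.le
    have a1 : (0:ℝ) < ((l.take m).prod : ℕ) := by exact_mod_cast hprod m
    have a2 : (0:ℝ) < (l.getD (m-1) 1 : ℕ) := by exact_mod_cast hget1 (m-1)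
    positivity) l.length le_rfl rfl
  have hf := Real.log_le_log hE0 hfail
  rw [hlog] at hf
  have := mul_le_mul_of_nonneg_left hwE (show (0:ℝ) ≤ (14/15 : ℝ) ^ ((l.length+1)/2) by positivity)
  change _ ≤ x (l.length - 1)
  linarith

lemma bs_two_pow (K r : ℕ) (hr : r ≤ K) (v : ℝ) (hv : (14/15 : ℝ) ^ ((r+1)/2) ≤ v) :
    1 ≤ (2:ℝ) ^ (K+1) * v ^ 20 := by
  have h1 : (1/2:ℝ) ≤ (14/15) ^ 10 := by norm_num
  have h2 : (1/2:ℝ) ^ (r+1) ≤ v ^ 20 := by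
    calc (1/2:ℝ) ^ (r+1) ≤ ((14/15) ^ 10) ^ (r+1) := by gcongr
      _ = (14/15) ^ (10 * (r+1)) := by rw [pow_mul]
      _ ≤ (14/15) ^ ((r+1)/2 * 20) := by
        apply pow_le_pow_of_le_one (by norm_num) (by norm_num); omega
      _ = ((14/15 : ℝ) ^ ((r+1)/2)) ^ 20 := by rw [pow_mul]
      _ ≤ _ := by gcongr
  calc (1:ℝ) = 2 ^ (r+1) * (1/2) ^ (r+1) := by rw [← mul_pow]; norm_num
    _ ≤ 2 ^ (K+1) * v ^ 20 := by
      apply mul_le_mul _ h2 (by positivity) (by positivity)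
      exact pow_le_pow_right₀ (by norm_num) (by omega)

lemma bs_pfl (p e : ℕ) (hp : p.Prime) (he : e ≠ 0) (hlt : ∀ q ∈ e.primeFactors, p < q) :
    (p * e).primeFactorsList = p :: e.primeFactorsList := by
  have hm : (p * e).minFac = p := by
    apply le_antisymm (Nat.minFac_le_of_dvd hp.two_le (Dvd.intro _ rfl))
    have hne : p * e ≠ 1 := by
      intro h
      have := Nat.eq_one_of_mul_eq_one_right h
      exact hp.one_lt.ne' this
    have hmp := Nat.minFac_prime hne
    rcases (Nat.Prime.dvd_mul hmp).1 (Nat.minFac_dvd (p * e)) with h | h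
    · exact ((Nat.prime_dvd_prime_iff_eq hmp hp).1 h).ge
    · exact (hlt _ (Nat.mem_primeFactors.2 ⟨hmp, h, he⟩)).le
  have h2 : 2 ≤ p * e := by
    have := hp.two_le
    have : 1 ≤ e := Nat.one_le_iff_ne_zero.2 he
    nlinarith
  obtain ⟨k, hk⟩ := Nat.exists_eq_add_of_le' h2
  have := Nat.primeFactorsList_add_two k
  rw [← hk, hm, Nat.mul_div_cancel_left _ hp.pos] at this
  exact this

lemma bs_weight (w E : ℝ) (hw1 : 1 < w) (hE : w ^ 30 ≤ E) (useOdd : Bool) (p e K : ℕ)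
    (hp : p.Prime) (he : Squarefree e) (hlt : ∀ q ∈ e.primeFactors, p < q)
    (hpw : (p:ℝ) < w) (hK : e.primeFactors.card + 1 ≤ K)
    (hv : (2:ℝ) ^ (K+1) * (Real.log p / Real.log w) ^ 20 < 1) :
    sieveWeight 0 w E 30 useOdd (p * e) = - sieveWeight 0 w E 30 useOdd e := by
  have he0 : e ≠ 0 := he.ne_zero
  have hpe : ¬ p ∣ e := fun h =>
    lt_irrefl _ (hlt p (Nat.mem_primeFactors.2 ⟨hp, h, he0⟩))
  have hcop : p.Coprime e := (hp.coprime_iff_not_dvd).2 hpe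
  have hsq : Squarefree (p * e) := (Nat.squarefree_mul hcop).2 ⟨hp.squarefree, he⟩
  have hpf : (p * e).primeFactors = insert p e.primeFactors := by
    rw [Nat.primeFactors_mul hp.ne_zero he0, hp.primeFactors]; rfl
  have hlen : e.primeFactorsList.length = e.primeFactors.card := by
    rw [Nat.primeFactors, List.toFinset_card_of_nodup]
    exact (Nat.squarefree_iff_nodup_primeFactorsList he0).1 he
  have hmu : (ArithmeticFunction.moebius (p * e) : ℝ) = - ArithmeticFunction.moebius e := by
    rw [ArithmeticFunction.isMultiplicative_moebius.map_mul_of_coprime hcop,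
      ArithmeticFunction.moebius_apply_prime hp]
    push_cast; ring
  set l := e.primeFactorsList.reverse with hl
  have hrev : (p * e).primeFactorsList.reverse = l ++ [p] := by
    rw [bs_pfl p e hp he0 hlt, List.reverse_cons]
  have hll : l.length = e.primeFactorsList.length := by simp [hl]
  have hlen' : (p * e).primeFactorsList.length = l.length + 1 := by
    rw [← List.length_reverse, hrev]; simp
  have htake : ∀ m, m ≤ l.length → (l ++ [p]).take m = l.take m := fun m hm =>
    List.take_append_of_le_length hm
  have hgetD : ∀ m, 1 ≤ m → m ≤ l.length → (l ++ [p]).getD (m-1) 1 = l.getD (m-1) 1 := by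
    intro m h1 hm
    exact List.getD_append _ _ _ _ (by omega)
  unfold sieveWeight
  rw [hrev, hlen', ← hll, hmu]
  by_cases hprimes : ∀ q ∈ e.primeFactors, (0:ℝ) ≤ q ∧ (q:ℝ) < w
  swap
  · rw [if_neg, if_neg, neg_zero]
    · exact fun h => hprimes h.2.1
    · exact fun h => hprimes fun q hq => h.2.1 q (by rw [hpf]; exact Finset.mem_insert_of_mem hq)
  by_cases hcond : ∀ m : ℕ, 1 ≤ m → m ≤ l.length → (if useOdd then Odd m else Even m) →
        (((l.take m).prod : ℕ) : ℝ) * ((l.getD (m - 1) 1 : ℕ) : ℝ) ^ 30 < E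
  swap
  · rw [if_neg, if_neg, neg_zero]
    · exact fun h => hcond h.2.2
    · intro h
      apply hcond
      intro m hm1 hm2 hm3
      have := h.2.2 m hm1 (by omega) hm3
      rwa [htake m hm2, hgetD m hm1 hm2] at this
  rw [if_pos, if_pos]
  · exact ⟨he, hprimes, hcond⟩
  · refine ⟨hsq, ?_, ?_⟩
    · intro q hq
      rw [hpf, Finset.mem_insert] at hq
      rcases hq with rfl | hq
      · exact ⟨Nat.cast_nonneg _, hpw⟩
      · exact hprimes q hq
    · intro m hm1 hm2 hm3
      by_cases hm : m ≤ l.length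
      · rw [htake m hm, hgetD m hm1 hm]
        exact hcond m hm1 hm hm3
      · have hm' : m = (l ++ [p]).length := by simp; omega
        by_contra hcon
        push Not at hcon
        have hmem : ∀ a ∈ l ++ [p], a = p ∨ a ∈ e.primeFactors := by
          intro a ha
          rw [List.mem_append, hl, List.mem_reverse, List.mem_singleton] at ha
          rcases ha with ha | ha
          · right; exact List.mem_toFinset.2 ha
          · left; exact ha
        have key := bs_list (l ++ [p]) ?_ ?_ w E hw1 ?_ hE useOdd (by simp) (hm' ▸ hm3) ?_
          (by rw [← hm']; exact hcon)
        · have hget : (l ++ [p]).getD ((l ++ [p]).length - 1) 1 = p := by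
            simp
          rw [hget, ← le_div_iff₀ (Real.log_pos hw1)] at key
          have := bs_two_pow K _ (by simp; omega) _ key
          linarith
        · rw [← hrev, List.pairwise_reverse]
          exact (Nat.primeFactorsList_sorted _).pairwise
        · intro a ha
          rcases hmem a ha with rfl | h
          · exact hp.one_lt.le
          · exact (Nat.prime_of_mem_primeFactors h).one_lt.le
        · intro a ha
          rcases hmem a ha with rfl | h
          · exact hpw
          · exact (hprimes a h).2
        · intro k hk1 hk2 hk3
          have hk : k ≤ l.length := by simp at hk2; omega
          rw [htake k hk, hgetD k hk1 hk]
          exact hcond k hk1 hk hk3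

lemma bs_theta_zero (w E : ℝ) (hw1 : 1 < w) (hE : w ^ 30 ≤ E) (useOdd : Bool) (p g : ℕ)
    (hg : Squarefree g) (hp : p.Prime) (hpg : p ∣ g) (hpw : (p:ℝ) < w)
    (hmin : ∀ q ∈ g.primeFactors, p ≤ q)
    (hv : (2:ℝ) ^ (g.primeFactors.card+1) * (Real.log p / Real.log w) ^ 20 < 1) :
    ∑ e ∈ g.divisors, sieveWeight 0 w E 30 useOdd e = 0 := by
  have hg0 := hg.ne_zero
  have key : ∀ e, p * e ∣ g → 
      sieveWeight 0 w E 30 useOdd (p * e) = - sieveWeight 0 w E 30 useOdd e := by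
    intro e he
    have hsq : Squarefree (p * e) := hg.squarefree_of_dvd he
    have hcop : p.Coprime e := Nat.coprime_of_squarefree_mul hsq
    have he0 : e ≠ 0 := (hsq.of_mul_right).ne_zero
    have hpe : p ∉ e.primeFactors := fun h =>
      (hp.coprime_iff_not_dvd).1 hcop (Nat.dvd_of_mem_primeFactors h)
    have hsub := Nat.primeFactors_mono he hg0
    rw [Nat.primeFactors_mul hp.ne_zero he0, hp.primeFactors] at hsub
    apply bs_weight w E hw1 hE useOdd p e g.primeFactors.card hp hsq.of_mul_right _ hpw _ hv
    · intro q hq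
      apply lt_of_le_of_ne (hmin q (hsub (Finset.mem_union_right _ hq)))
      rintro rfl
      exact hpe hq
    · have := Finset.card_le_card hsub
      rw [Finset.card_union_of_disjoint (by simpa using hpe), Finset.card_singleton] at this
      omega
  have hnd : ∀ e, e ∣ g → ¬ p ∣ e → p * e ∣ g := fun e he hpe =>
    Nat.Coprime.mul_dvd_of_dvd_of_dvd ((hp.coprime_iff_not_dvd).2 hpe) hpg he
  have hnd2 : ∀ e, p * e ∣ g → ¬ p ∣ e := fun e he h =>
    (hp.coprime_iff_not_dvd).1 (Nat.coprime_of_squarefree_mul (hg.squarefree_of_dvd he)) h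
  refine Finset.sum_involution (fun e _ => if p ∣ e then e / p else p * e) ?_ ?_ ?_ ?_
  · intro e he
    have hed := Nat.dvd_of_mem_divisors he
    by_cases h : p ∣ e
    · simp only [h, if_true]
      obtain ⟨d, rfl⟩ := h
      rw [Nat.mul_div_cancel_left _ hp.pos, key d hed]; ring
    · simp only [h, if_false]
      rw [key e (hnd e hed h)]; ring
  · intro e he _
    have hed := Nat.dvd_of_mem_divisors he
    have he0 : 0 < e := Nat.pos_of_mem_divisors he
    by_cases h : p ∣ e
    · simp only [h, if_true]
      exact (Nat.div_lt_self he0 hp.one_lt).ne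
    · simp only [h, if_false]
      have := hp.two_le
      intro h; nlinarith
  · intro e he
    have hed := Nat.dvd_of_mem_divisors he
    rw [Nat.mem_divisors]
    refine ⟨?_, hg0⟩
    by_cases h : p ∣ e
    · simp only [h, if_true]
      exact (Nat.div_dvd_of_dvd h).trans hed
    · simp only [h, if_false]
      exact hnd e hed h
  · intro e he
    have hed := Nat.dvd_of_mem_divisors he
    by_cases h : p ∣ e
    · simp only [h, if_true]
      obtain ⟨d, rfl⟩ := h
      rw [Nat.mul_div_cancel_left _ hp.pos, if_neg (hnd2 d hed)]
    · simp only [h, if_false]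
      rw [if_pos (Dvd.intro _ rfl), Nat.mul_div_cancel_left _ hp.pos]

lemma bs_abs_weight (lo hi lvl : ℝ) (β : ℕ) (u : Bool) (d : ℕ) :
    |sieveWeight lo hi lvl β u d| ≤ 1 := by
  have h1 : |(ArithmeticFunction.moebius d : ℝ)| ≤ 1 := by
    exact_mod_cast ArithmeticFunction.abs_moebius_le_one (n := d)
  unfold sieveWeight
  by_cases hu : u = true <;> simp only [hu] <;> split_ifs <;> simp [h1]

lemma bs_card_div (g : ℕ) (hg : Squarefree g) : g.divisors.card = 2 ^ g.primeFactors.card := by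
  rw [Nat.card_divisors hg.ne_zero, ← Finset.prod_const]
  apply Finset.prod_congr rfl
  intro q hq
  rw [Nat.factorization_eq_one_of_squarefree hg (Nat.prime_of_mem_primeFactors hq)
    (Nat.dvd_of_mem_primeFactors hq)]

lemma bs_theta_sq (w E : ℝ) (hw1 : 1 < w) (hE : w ^ 30 ≤ E) (useOdd : Bool) (p g : ℕ)
    (hg : Squarefree g) (hp : p.Prime) (hpg : p ∣ g) (hpw : (p:ℝ) < w)
    (hmin : ∀ q ∈ g.primeFactors, p ≤ q) :
    (∑ e ∈ g.divisors, sieveWeight 0 w E 30 useOdd e) ^ 2 ≤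
      2 * (Real.log p / Real.log w) ^ 20 * 8 ^ g.primeFactors.card := by
  have hv0 : (0:ℝ) ≤ (Real.log p / Real.log w) ^ 20 := by
    have := Real.log_pos hw1
    have := Real.log_natCast_nonneg p
    positivity
  by_cases hv : (2:ℝ) ^ (g.primeFactors.card+1) * (Real.log p / Real.log w) ^ 20 < 1
  · rw [bs_theta_zero w E hw1 hE useOdd p g hg hp hpg hpw hmin hv]
    rw [zero_pow two_ne_zero]; positivity
  · push Not at hv
    have h1 : |∑ e ∈ g.divisors, sieveWeight 0 w E 30 useOdd e| ≤ 2 ^ g.primeFactors.card := by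
      refine (Finset.abs_sum_le_sum_abs _ _).trans ?_
      refine (Finset.sum_le_sum fun e _ => bs_abs_weight 0 w E 30 useOdd e).trans ?_
      simp [bs_card_div g hg]
    have h2 : (∑ e ∈ g.divisors, sieveWeight 0 w E 30 useOdd e) ^ 2 ≤
        ((2:ℝ) ^ g.primeFactors.card) ^ 2 := by
      rw [← sq_abs]
      gcongr
    refine h2.trans ?_
    have h3 : (8:ℝ) ^ g.primeFactors.card =
        ((2:ℝ) ^ g.primeFactors.card) ^ 2 * 2 ^ g.primeFactors.card := by
      rw [← pow_succ, ← pow_mul, mul_comm, pow_mul]; norm_num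
    rw [h3]
    rw [pow_succ] at hv
    calc ((2:ℝ) ^ g.primeFactors.card) ^ 2 = ((2:ℝ) ^ g.primeFactors.card) ^ 2 * 1 := by ring
      _ ≤ ((2:ℝ) ^ g.primeFactors.card) ^ 2 *
        (2 ^ g.primeFactors.card * 2 * (Real.log p / Real.log w) ^ 20) := by gcongr
      _ = _ := by ring

lemma bs_weight_one (lo hi lvl : ℝ) (β : ℕ) (u : Bool) : sieveWeight lo hi lvl β u 1 = 1 := by
  unfold sieveWeight
  rw [if_pos]
  · simp
  · refine ⟨squarefree_one, by simp, ?_⟩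
    intro m h1 h2
    simp at h2
    omega

lemma bs_point (w E : ℝ) (hw1 : 1 < w) (hE : w ^ 30 ≤ E) (useOdd : Bool) (n : ℕ) (hn : n ≠ 0) :
    (∑ e ∈ (gcdPart 0 w n).divisors, sieveWeight 0 w E 30 useOdd e) ^ 2 ≤
      bsF (bsH ⌈w⌉₊ ⌈w⌉₊) n + ∑ p ∈ (Finset.Icc 1 (⌈w⌉₊ - 1)).filter Nat.Prime,
        if p ∣ n then 2 * (Real.log p / Real.log w) ^ 20 * bsF (bsH p ⌈w⌉₊) n else 0 := by
  set W := ⌈w⌉₊ with hW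
  have hltW : ∀ q : ℕ, (q:ℝ) < w ↔ q < W := fun q => Nat.lt_ceil.symm
  set S := n.primeFactors.filter (fun p : ℕ => (0:ℝ) ≤ (p : ℝ) ∧ (p : ℝ) < w) with hS
  have hmemS : ∀ q, q ∈ S ↔ q ∈ n.primeFactors ∧ q < W := by
    intro q
    rw [hS, Finset.mem_filter, hltW]
    simp
  have hSp : ∀ q ∈ S, q.Prime := fun q hq => Nat.prime_of_mem_primeFactors ((hmemS q).1 hq).1
  have hg : gcdPart 0 w n = ∏ p ∈ S, p := by
    unfold gcdPart
    rfl
  have hpf : (gcdPart 0 w n).primeFactors = S := by rw [hg, Nat.primeFactors_prod hSp]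
  have hterm : ∀ p : ℕ, 0 ≤ (if p ∣ n then
      2 * (Real.log p / Real.log w) ^ 20 * bsF (bsH p W) n else 0) := by
    intro p
    split_ifs
    · have h1 := Real.log_pos hw1
      have h2 := Real.log_natCast_nonneg p
      have h3 := bsF_nonneg (bsH p W) (bsH_nonneg p W) n
      positivity
    · exact le_rfl
  rcases S.eq_empty_or_nonempty with hemp | hne
  · rw [hg, hemp, Finset.prod_empty, Nat.divisors_one, Finset.sum_singleton, bs_weight_one]
    have h1 : bsF (bsH W W) n = 1 := by
      unfold bsF
      apply Finset.prod_eq_one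
      intro q hq
      have : ¬ q < W := fun h => by
        have := (hmemS q).2 ⟨hq, h⟩
        rw [hemp] at this
        simp at this
      simp [bsH, this]
    rw [h1, one_pow]
    have := Finset.sum_nonneg fun p (_ : p ∈ (Finset.Icc 1 (W - 1)).filter Nat.Prime) => hterm p
    linarith
  · set p := S.min' hne with hp
    have hpS : p ∈ S := Finset.min'_mem _ _
    have hpp := hSp p hpS
    have hpn := (hmemS p).1 hpS
    have hmin : ∀ q ∈ S, p ≤ q := fun q hq => Finset.min'_le _ _ hq
    have hsq : Squarefree (gcdPart 0 w n) := by
      rw [hg]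
      apply Finset.squarefree_prod_of_pairwise_isCoprime
      · intro a ha b hb hab
        exact Nat.coprime_iff_isRelPrime.1 ((Nat.coprime_primes (hSp a ha) (hSp b hb)).2 hab)
      · intro a ha
        exact (hSp a ha).squarefree
    have hmain := bs_theta_sq w E hw1 hE useOdd p (gcdPart 0 w n) hsq hpp
      (by rw [hg]; exact Finset.dvd_prod_of_mem _ hpS) ((hltW p).2 hpn.2)
      (by rw [hpf]; exact hmin)
    have hF : bsF (bsH p W) n = 8 ^ (gcdPart 0 w n).primeFactors.card := by
      rw [hpf]
      unfold bsF
      have h1 : ∀ q ∈ n.primeFactors, bsH p W q = if q ∈ S then 8 else 1 := by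
        intro q hq
        unfold bsH
        by_cases hqW : q < W
        · have hqS := (hmemS q).2 ⟨hq, hqW⟩
          have := hmin q hqS
          rw [if_neg (by omega), if_pos hqW, if_pos hqS]
        · have hqS : q ∉ S := fun h => hqW ((hmemS q).1 h).2
          rw [if_neg (by have := hpn.2; omega), if_neg hqW, if_neg hqS]
      rw [Finset.prod_congr rfl h1, Finset.prod_ite_mem, Finset.prod_const]
      congr 2
      exact Finset.inter_eq_right.2 fun q hq => ((hmemS q).1 hq).1
    rw [← hF] at hmain
    have h0 := bsF_nonneg (bsH W W) (bsH_nonneg W W) n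
    have hsingle := Finset.single_le_sum (f := fun p : ℕ => if p ∣ n then
      2 * (Real.log p / Real.log w) ^ 20 * bsF (bsH p W) n else 0) (fun p _ => hterm p)
      (show p ∈ (Finset.Icc 1 (W - 1)).filter Nat.Prime from
        Finset.mem_filter.2 ⟨Finset.mem_Icc.2 ⟨hpp.one_lt.le, by have := hpn.2; omega⟩, hpp⟩)
    simp only [Nat.dvd_of_mem_primeFactors hpn.1, if_true] at hsingle
    linarith

lemma bs_dvd_sum (h : ℕ → ℝ) (h0 : ∀ q, 0 ≤ h q) (h8 : ∀ q, h q ≤ 8) (p N : ℕ)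
    (hp : p.Prime) :
    (∑ n ∈ Finset.Ioc 0 N, if p ∣ n then bsF h n else 0) ≤
      8 * ∑ m ∈ Finset.Ioc 0 (N / p), bsF h m := by
  rw [← Finset.sum_filter]
  have himg : (Finset.Ioc 0 N).filter (fun n => p ∣ n) =
      (Finset.Ioc 0 (N / p)).image (fun m => p * m) := by
    ext n
    simp only [Finset.mem_filter, Finset.mem_Ioc, Finset.mem_image]
    constructor
    · rintro ⟨⟨h1, h2⟩, m, rfl⟩
      refine ⟨m, ⟨Nat.pos_of_mul_pos_left h1, ?_⟩, rfl⟩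
      rw [Nat.le_div_iff_mul_le hp.pos, mul_comm]; exact h2
    · rintro ⟨m, ⟨h1, h2⟩, rfl⟩
      rw [Nat.le_div_iff_mul_le hp.pos, mul_comm] at h2
      exact ⟨⟨Nat.mul_pos hp.pos h1, h2⟩, Dvd.intro _ rfl⟩
  rw [himg, Finset.sum_image (fun a _ b _ hab => Nat.eq_of_mul_eq_mul_left hp.pos hab),
    Finset.mul_sum]
  apply Finset.sum_le_sum
  intro m hm
  have hm0 : m ≠ 0 := by have := Finset.mem_Ioc.1 hm; omega
  exact bsF_primePow_mul h h0 h8 hp.isPrimePow hm0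

lemma bs_total (w E : ℝ) (hw1 : 1 < w) (hE : w ^ 30 ≤ E) (useOdd : Bool) (N : ℕ) :
    ∑ n ∈ Finset.Icc 1 N,
      (∑ e ∈ (gcdPart 0 w n).divisors, sieveWeight 0 w E 30 useOdd e) ^ 2 ≤
      ∑ n ∈ Finset.Ioc 0 N, bsF (bsH ⌈w⌉₊ ⌈w⌉₊) n +
      ∑ p ∈ (Finset.Icc 1 (⌈w⌉₊ - 1)).filter Nat.Prime,
        16 * (Real.log p / Real.log w) ^ 20 * ∑ m ∈ Finset.Ioc 0 (N / p), bsF (bsH p ⌈w⌉₊) m := by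
  have hIcc : Finset.Icc 1 N = Finset.Ioc 0 N := rfl
  rw [hIcc]
  refine (Finset.sum_le_sum fun n hn => bs_point w E hw1 hE useOdd n
    (by have := Finset.mem_Ioc.1 hn; omega)).trans ?_
  rw [Finset.sum_add_distrib, Finset.sum_comm]
  apply add_le_add le_rfl
  apply Finset.sum_le_sum
  intro p hp
  have hpp := (Finset.mem_filter.1 hp).2
  have h1 := bs_dvd_sum (bsH p ⌈w⌉₊) (bsH_nonneg p _) (bsH_le p _) p N hpp
  have hv0 : (0:ℝ) ≤ 2 * (Real.log p / Real.log w) ^ 20 := by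
    have := Real.log_pos hw1
    have := Real.log_natCast_nonneg p
    positivity
  have h2 := mul_le_mul_of_nonneg_left h1 hv0
  rw [Finset.mul_sum] at h2
  simp only [mul_ite, mul_zero] at h2
  refine h2.trans (le_of_eq ?_)
  ring

lemma bs_size (δ X Y : ℝ) (hδ : 0 < δ) (hδ' : δ ≤ 1 / 30000) (hX : 16 ≤ X) (hXY : X ≤ Y)
    (hYX : Y ≤ X ^ (10:ℝ)) (d : ℕ) (hd : 1 ≤ d) (hdw : (d:ℝ) ≤ X ^ δ) :
    ⌈X ^ δ⌉₊ ≤ ⌊Y⌋₊ / d ∧ Real.log X ≤ 2 * Real.log (⌊Y⌋₊ / d : ℕ) ∧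
      Real.log (⌊Y⌋₊ / d : ℕ) ≤ (10 / δ) * Real.log ⌈X ^ δ⌉₊ ∧
      ((⌊Y⌋₊ / d : ℕ) : ℝ) ≤ Y / d := by
  have hX0 : 0 < X := by linarith
  have hX1 : 1 ≤ X := by linarith
  have hY0 : 0 < Y := by linarith
  have hd0 : (0:ℝ) < d := by exact_mod_cast hd
  set a := X ^ ((1:ℝ)/4) with ha
  have ha4 : a ^ 4 = X := by
    rw [ha, ← Real.rpow_natCast, ← Real.rpow_mul hX0.le]; norm_num
  have ha0 : 0 < a := by positivity
  have ha2 : 2 ≤ a := by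
    by_contra h
    push Not at h
    have : a ^ 4 < 2 ^ 4 := by gcongr
    rw [ha4] at this
    linarith
  have hwa : X ^ δ ≤ a := Real.rpow_le_rpow_of_exponent_le hX1 (by linarith)
  have hfl : ⌊Y⌋₊ / d = ⌊Y / d⌋₊ := (Nat.floor_div_natCast Y d).symm
  have hYd : a ^ 3 ≤ Y / d := by
    rw [le_div_iff₀ hd0]
    calc a ^ 3 * d ≤ a ^ 3 * a := by gcongr; linarith
      _ = X := by rw [← ha4]; ring
      _ ≤ Y := hXY
  have hN2 : a ^ 2 ≤ ((⌊Y⌋₊ / d : ℕ) : ℝ) := by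
    rw [hfl]
    have := Nat.lt_floor_add_one (Y / d)
    nlinarith
  have hNle : ((⌊Y⌋₊ / d : ℕ) : ℝ) ≤ Y / d := by
    rw [hfl]; exact Nat.floor_le (by positivity)
  refine ⟨?_, ?_, ?_, hNle⟩
  · have : (⌈X ^ δ⌉₊ : ℝ) ≤ ((⌊Y⌋₊ / d : ℕ) : ℝ) := by
      have := Nat.ceil_lt_add_one (a := X ^ δ) (by positivity)
      nlinarith
    exact_mod_cast this
  · have := Real.log_le_log (by positivity) hN2
    rw [← ha4, Real.log_pow]
    rw [Real.log_pow] at this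
    push_cast at this ⊢
    linarith
  · have h1 : ((⌊Y⌋₊ / d : ℕ) : ℝ) ≤ X ^ (10:ℝ) := by
      refine hNle.trans (le_trans ?_ hYX)
      apply div_le_self hY0.le
      exact_mod_cast hd
    have h2 := Real.log_le_log (lt_of_lt_of_le (by positivity) hN2) h1
    rw [Real.log_rpow hX0] at h2
    have h3 := Real.log_le_log (by positivity) (Nat.le_ceil (X ^ δ))
    rw [Real.log_rpow hX0] at h3
    have h4 : (10 / δ) * (δ * Real.log X) ≤ (10 / δ) * Real.log ⌈X ^ δ⌉₊ := by gcongr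
    have h5 : (10 / δ) * (δ * Real.log X) = 10 * Real.log X := by field_simp
    linarith

/-- For fixed `δ ∈ (0, 1/30000]` and all sufficiently large `X`, with `w = X^δ`,
`E = X^{1/1000}` and the β-sieve weights `ρ^±` (β = 30) of level `E` on primes `< w`,
one has `Σ_{n ≤ Y} (Σ_{e ∣ (n, P(w))} ρ_e^±)² ≤ C(δ)·Y/log X` for `X ≤ Y ≤ X^{10}`
and both choices of sign. -/
theorem beta_sieve_weights_divisor_sum_mean_square
    (δ : ℝ) (hδ : 0 < δ) (hδ' : δ ≤ 1 / 30000) :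
    ∃ C : ℝ, 0 < C ∧ ∃ X₀ : ℝ, ∀ X : ℝ, X₀ ≤ X →
      ∀ Y : ℝ, X ≤ Y → Y ≤ X ^ (10 : ℝ) → ∀ useOdd : Bool,
        ∑ n ∈ Finset.Icc 1 ⌊Y⌋₊,
            (∑ e ∈ (gcdPart 0 (X ^ δ) n).divisors,
              sieveWeight 0 (X ^ δ) (X ^ ((1 : ℝ) / 1000)) 30 useOdd e) ^ 2 ≤
          C * Y / Real.log X := by
  have hR0 : (0:ℝ) < 10 / δ := by positivity
  set R : ℝ := 10 / δ with hRdef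
  refine ⟨98 * (R ^ 2 * Real.exp 4) + 4704 * (Real.exp 32 * (R ^ 2 * Real.exp 4)), by positivity,
    max 16 (Real.exp (1 / δ)), ?_⟩
  intro X hX Y hXY hYX useOdd
  have hX16 : 16 ≤ X := (le_max_left _ _).trans hX
  have hXe : Real.exp (1 / δ) ≤ X := (le_max_right _ _).trans hX
  have hX0 : 0 < X := by linarith
  have hY0 : 0 < Y := by linarith
  have hlX : 0 < Real.log X := Real.log_pos (by linarith)
  have hlw : 1 ≤ Real.log (X ^ δ) := by
    rw [Real.log_rpow hX0]
    have := Real.log_le_log (Real.exp_pos _) hXe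
    rw [Real.log_exp, div_le_iff₀ hδ] at this
    linarith
  set w := X ^ δ with hw
  have hw1 : 1 < w := Real.one_lt_rpow (by linarith) hδ
  have hE : w ^ 30 ≤ X ^ ((1:ℝ)/1000) := by
    rw [hw, ← Real.rpow_natCast, ← Real.rpow_mul hX0.le]
    apply Real.rpow_le_rpow_of_exponent_le (by linarith)
    push_cast; linarith
  refine (bs_total w _ hw1 hE useOdd ⌊Y⌋₊).trans ?_
  set W := ⌈w⌉₊ with hW
  have hW2 : 2 ≤ W := by
    have : 1 < W := Nat.lt_ceil.2 (by exact_mod_cast hw1)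
    omega
  have hW1w : ((W-1:ℕ):ℝ) ≤ w := (Nat.lt_ceil.1 (by omega : W - 1 < ⌈w⌉₊)).le
  have hlW1 : Real.log (W-1:ℕ) ≤ Real.log w :=
    Real.log_le_log (by exact_mod_cast (by omega : 0 < W - 1)) hW1w
  -- first part
  have part1 : ∑ n ∈ Finset.Ioc 0 ⌊Y⌋₊, bsF (bsH W W) n ≤
      98 * (R ^ 2 * Real.exp 4) * Y / Real.log X := by
    obtain ⟨a1, a2, a3, a4⟩ := bs_size δ X Y hδ hδ' hX16 hXY hYX 1 le_rfl (by simpa using hw1.le)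
    rw [Nat.div_one] at a1 a2 a3 a4
    have hT := bs_T1 W ⌊Y⌋₊ hW2 a1 R a3
    have hs0 : 0 ≤ ∑ n ∈ Finset.Ioc 0 ⌊Y⌋₊, bsF (bsH W W) n :=
      Finset.sum_nonneg fun n _ => bsF_nonneg _ (bsH_nonneg W W) n
    rw [le_div_iff₀ hlX]
    rw [Nat.cast_one, div_one] at a4
    have b1 : 49 * (⌊Y⌋₊:ℝ) * (R ^ 2 * Real.exp 4) ≤ 49 * Y * (R ^ 2 * Real.exp 4) := by gcongr
    have b2 := mul_le_mul_of_nonneg_left a2 hs0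
    linarith
  have part2 : ∀ p ∈ (Finset.Icc 1 (W - 1)).filter Nat.Prime,
      16 * (Real.log p / Real.log w) ^ 20 * ∑ m ∈ Finset.Ioc 0 (⌊Y⌋₊ / p), bsF (bsH p W) m ≤
      1568 * (Real.exp 32 * (R ^ 2 * Real.exp 4)) * Y / Real.log X / Real.log w *
        (Real.log p / p) := by
    intro p hp
    obtain ⟨hp1, hpp⟩ := Finset.mem_filter.1 hp
    rw [Finset.mem_Icc] at hp1
    have hpw : (p:ℝ) < w := Nat.lt_ceil.1 (by omega : p < ⌈w⌉₊)
    obtain ⟨a1, a2, a3, a4⟩ := bs_size δ X Y hδ hδ' hX16 hXY hYX p hp1.1 hpw.le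
    have hp0 : (0:ℝ) < p := by exact_mod_cast hpp.pos
    have hlp : 0 < Real.log p := Real.log_pos (by exact_mod_cast hpp.one_lt)
    have hlpw : Real.log p ≤ Real.log w := Real.log_le_log hp0 hpw.le
    have hlw0 : 0 < Real.log w := by linarith
    set v := Real.log p / Real.log w with hv
    have hv0 : 0 < v := by positivity
    have hv1 : v ≤ 1 := by rw [hv, div_le_one hlw0]; exact hlpw
    have hT := bs_T2 p W (⌊Y⌋₊ / p) hpp.two_le (by omega) a1 R v⁻¹ a3
      (by rw [hv, inv_div, div_mul_cancel₀ _ hlp.ne']; exact hlW1)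
    set T := ∑ m ∈ Finset.Ioc 0 (⌊Y⌋₊ / p), bsF (bsH p W) m with hTdef
    have hT0 : 0 ≤ T := Finset.sum_nonneg fun n _ => bsF_nonneg _ (bsH_nonneg p W) n
    have b0 : T * Real.log X ≤ 98 * (Y / p) * ((v⁻¹ ^ 12 * Real.exp 32) * (R ^ 2 * Real.exp 4)) := by
      have b1 : 49 * ((⌊Y⌋₊ / p : ℕ):ℝ) * ((v⁻¹ ^ 12 * Real.exp 32) * (R ^ 2 * Real.exp 4)) ≤
        49 * (Y / p) * ((v⁻¹ ^ 12 * Real.exp 32) * (R ^ 2 * Real.exp 4)) := by gcongr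
      have b2 := mul_le_mul_of_nonneg_left a2 hT0
      linarith
    have hv8 : v ^ 20 * v⁻¹ ^ 12 ≤ v := by
      have : v ^ 20 * v⁻¹ ^ 12 = v ^ 8 := by field_simp
      rw [this]
      calc v ^ 8 ≤ v ^ 1 := pow_le_pow_of_le_one hv0.le hv1 (by norm_num)
        _ = v := pow_one v
    have c1 : 16 * v ^ 20 * T ≤
        16 * v ^ 20 * (98 * (Y / p) * ((v⁻¹ ^ 12 * Real.exp 32) * (R ^ 2 * Real.exp 4)) /
          Real.log X) := by
      gcongr
      rwa [le_div_iff₀ hlX]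
    refine c1.trans ?_
    calc _ = (v ^ 20 * v⁻¹ ^ 12) *
          (1568 * (Real.exp 32 * (R ^ 2 * Real.exp 4)) * (Y / p) / Real.log X) := by ring
      _ ≤ v * (1568 * (Real.exp 32 * (R ^ 2 * Real.exp 4)) * (Y / p) / Real.log X) := by gcongr
      _ = _ := by rw [hv]; ring
  have part3 := Finset.sum_le_sum part2
  rw [← Finset.mul_sum] at part3
  have hm := bs_mertens1 (W-1) (by omega)
  rw [← Finset.sum_filter] at hm
  have hm2 : ∑ p ∈ (Finset.Icc 1 (W - 1)).filter Nat.Prime, Real.log p / p ≤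
      3 * Real.log w := by
    refine hm.trans ?_
    have h4 := bs_log4_lt
    calc Real.log 4 * (1 + Real.log (W-1:ℕ)) ≤ 3 / 2 * (2 * Real.log w) := by
          apply mul_le_mul h4 (by linarith) _ (by norm_num)
          have := Real.log_natCast_nonneg (W-1)
          linarith
      _ = _ := by ring
  have part4 : 1568 * (Real.exp 32 * (R ^ 2 * Real.exp 4)) * Y / Real.log X / Real.log w *
      ∑ p ∈ (Finset.Icc 1 (W - 1)).filter Nat.Prime, Real.log p / p ≤
      4704 * (Real.exp 32 * (R ^ 2 * Real.exp 4)) * Y / Real.log X := by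
    have hlw0 : 0 < Real.log w := by linarith
    calc _ ≤ 1568 * (Real.exp 32 * (R ^ 2 * Real.exp 4)) * Y / Real.log X / Real.log w *
          (3 * Real.log w) := by gcongr
      _ = _ := by field_simp; ring
  calc _ ≤ 98 * (R ^ 2 * Real.exp 4) * Y / Real.log X +
        4704 * (Real.exp 32 * (R ^ 2 * Real.exp 4)) * Y / Real.log X :=
        add_le_add part1 (part3.trans part4)
    _ = _ := by ring
end
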